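/- arXiv:1410.0504 — 2 statements merged into one kernel-verified Lean document; each statement's English description precedes it below -/
import Mathlib

section
/- Let K be a convex, bounded, open subset of ℝ² with C² boundary. Then the anisotropic total curvature of ∂K satisfies the anisotropic Gauss–Bonnet formula ∫_{∂K} k_H(x) H(ν(x)) dℋ¹(x) = 2κ, where ν is the Euclidean outer unit normal to ∂K, k_H is the anisotropic curvature of ∂K, and κ is the Lebesgue measure of the Wulff shape of H. -/
open MeasureTheory Set
open scoped ENNReal NNReal RealInnerProductSpace

noncomputable section

/-- The plane `ℝ²`. -/
abbrev E2 : Type := EuclideanSpace ℝ (Fin 2)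

/-- The `i`-th partial derivative of `f` at `x`. -/
def pd (f : E2 → ℝ) (i : Fin 2) (x : E2) : ℝ :=
  fderiv ℝ f x (EuclideanSpace.single i 1)

/-- The Hessian matrix of `f` at `x`. -/
def hessian (f : E2 → ℝ) (x : E2) : Matrix (Fin 2) (Fin 2) ℝ :=
  Matrix.of fun i j => pd (pd f j) i x

/-- The hypotheses on the anisotropy `H`: a convex, coercive, positively `1`-homogeneous even
function, with `H²` strongly convex and `C²` away from the origin. -/
structure IsAnisoNorm (H : E2 → ℝ) : Prop where
  nonneg : ∀ ξ, 0 ≤ H ξ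
  convex : ConvexOn ℝ Set.univ H
  coercive : ∃ α > 0, ∀ ξ, α * ‖ξ‖ ≤ H ξ
  homog : ∀ (t : ℝ) (ξ : E2), H (t • ξ) = |t| * H ξ
  smooth : ContDiffOn ℝ 2 H {(0 : E2)}ᶜ
  posdef : ∀ ξ : E2, ξ ≠ 0 → ∀ v : E2, v ≠ 0 →
      0 < ∑ i, ∑ j, hessian (fun z => H z ^ 2) ξ i j * v i * v j

/-- The polar function `H^o(v) = sup_{ξ ≠ 0} (ξ·v)/H(ξ)`. -/
def polar (H : E2 → ℝ) (v : E2) : ℝ :=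
  ⨆ ξ : {ξ : E2 // ξ ≠ 0}, ⟪(ξ : E2), v⟫ / H ξ

/-- The Wulff shape `𝒲 = {H^o < 1}`. -/
def Wulff (H : E2 → ℝ) : Set E2 := {ξ | polar H ξ < 1}

/-- The scaled Wulff shape `𝒲_R = {H^o < R}`. -/
def wulffR (H : E2 → ℝ) (R : ℝ) : Set E2 := {ξ | polar H ξ < R}

/-- `κ`, the Lebesgue measure of the Wulff shape. -/
def kappa (H : E2 → ℝ) : ℝ := (volume (Wulff H)).toReal

/-- `F(ξ) = H(ξ)²/2`. -/
def Fani (H : E2 → ℝ) (ξ : E2) : ℝ := H ξ ^ 2 / 2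

/-- The matrix `A[u] = ∇²_ξ F(∇u) · ∇²u`. -/
def Amat (H u : E2 → ℝ) (x : E2) : Matrix (Fin 2) (Fin 2) ℝ :=
  hessian (Fani H) (gradient u x) * hessian u x

/-- The anisotropic Monge–Ampère operator `det_H[u] = det ∇²_ξF(∇u) · det ∇²u`. -/
def detH (H u : E2 → ℝ) (x : E2) : ℝ :=
  (hessian (Fani H) (gradient u x)).det * (hessian u x).det

/-- The cofactor matrix of a `2×2` matrix. -/
def cof (B : Matrix (Fin 2) (Fin 2) ℝ) : Matrix (Fin 2) (Fin 2) ℝ :=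
  Matrix.of ![![B 1 1, -B 1 0], ![-B 0 1, B 0 0]]

/-- The anisotropic curvature of the level line of `u` through `x`:
`k_H(x) = -Σ_{i,j} H_{ξ_iξ_j}(∇u) u_{ij}`. -/
def kH (H u : E2 → ℝ) (x : E2) : ℝ :=
  -∑ i, ∑ j, hessian H (gradient u x) i j * hessian u x i j

/-- The class `Φ₀(Ω)`: `W^{2,2}(Ω) ∩ C¹(Ω̄)` functions vanishing on `∂Ω`, concave in `Ω`. -/
structure MemPhi0 (Ω : Set E2) (u : E2 → ℝ) : Prop where
  sobolev : ∀ i j, MemLp (fun x => hessian u x i j) 2 (volume.restrict Ω)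
  c1 : ContDiffOn ℝ 1 u (closure Ω)
  bzero : ∀ x ∈ frontier Ω, u x = 0
  concave : ConcaveOn ℝ Ω u

/-- `max_{Ω̄} u`. -/
def maxcl (Ω : Set E2) (u : E2 → ℝ) : ℝ := sSup (u '' closure Ω)

/-- The set `E_u = {x ∈ Ω : 0 ≤ u(x) < max_{Ω̄} u}`. -/
def Eu (Ω : Set E2) (u : E2 → ℝ) : Set E2 :=
  {x ∈ Ω | 0 ≤ u x ∧ u x < maxcl Ω u}

/-- `K` has `C²` boundary: it admits a global `C²` defining function with nonvanishing
gradient on the boundary. -/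
def HasC2Boundary (K : Set E2) : Prop :=
  ∃ φ : E2 → ℝ, ContDiff ℝ 2 φ ∧ K = {x | φ x < 0} ∧
    frontier K = {x | φ x = 0} ∧ ∀ x ∈ frontier K, gradient φ x ≠ 0

/-- `K` has `C¹` boundary. -/
def HasC1Boundary (K : Set E2) : Prop :=
  ∃ φ : E2 → ℝ, ContDiff ℝ 1 φ ∧ K = {x | φ x < 0} ∧
    frontier K = {x | φ x = 0} ∧ ∀ x ∈ frontier K, gradient φ x ≠ 0

/-- The Euclidean outer unit normal `ν = -∇u/|∇u|` to a superlevel set of `u`. -/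
def nuLevel (u : E2 → ℝ) (x : E2) : E2 := -(‖gradient u x‖⁻¹ • gradient u x)

/-- The level set `Σ_t = {u = t}` (in `Ω̄`). -/
def levelSet (Ω : Set E2) (u : E2 → ℝ) (t : ℝ) : Set E2 :=
  {x ∈ closure Ω | u x = t}

/-- The superlevel set `Ω_t = {u > t}`. -/
def superLevel (Ω : Set E2) (u : E2 → ℝ) (t : ℝ) : Set E2 :=
  {x ∈ Ω | t < u x}

/-- `λ_H(t) = P_H({u > t}) = ∫_{{u = t}} H(ν) dℋ¹`. -/
def lambdaH (H : E2 → ℝ) (Ω : Set E2) (u : E2 → ℝ) (t : ℝ) : ℝ :=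
  ∫ x in levelSet Ω u t, H (nuLevel u x) ∂(μH[1] : Measure E2)

/-- The anisotropic perimeter `P_H(Ω) = λ_H(0)` of `Ω = {u > 0}`. -/
def PerH (H : E2 → ℝ) (Ω : Set E2) (u : E2 → ℝ) : ℝ := lambdaH H Ω u 0

/-- The rearrangement `u^♦(s) = sup{t ≥ 0 : λ_H(t) ≥ s}` of `u` with respect to the
anisotropic perimeter. -/
def diamondRe (H : E2 → ℝ) (Ω : Set E2) (u : E2 → ℝ) (s : ℝ) : ℝ :=
  sSup {t : ℝ | 0 ≤ t ∧ s ≤ lambdaH H Ω u t}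

/-- The anisotropic radial symmetrand `u^★(x) = u^♦(2κ H^o(x))`. -/
def starRe (H : E2 → ℝ) (Ω : Set E2) (u : E2 → ℝ) (x : E2) : ℝ :=
  diamondRe H Ω u (2 * kappa H * polar H x)

/-- `Ω^★ = 𝒲_R` with `R = P_H(Ω)/(2κ)`. -/
def OmegaStar (H : E2 → ℝ) (Ω : Set E2) (u : E2 → ℝ) : Set E2 :=
  wulffR H (PerH H Ω u / (2 * kappa H))

/-- The distribution function `μ(t) = |{x ∈ Ω : |f(x)| > t}|`. -/
def distrib (Ω : Set E2) (f : E2 → ℝ) (t : ℝ) : ℝ :=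
  (volume {x ∈ Ω | t < |f x|}).toReal

/-- The decreasing rearrangement `f*(s) = sup{t : μ(t) > s}`. -/
def decRe (Ω : Set E2) (f : E2 → ℝ) (s : ℝ) : ℝ :=
  sSup {t : ℝ | s < distrib Ω f t}

lemma gb_len_lower {γ : ℝ → E2} {s u : ℝ} (hsu : s ≤ u) (hγ : Continuous γ) :
    ENNReal.ofReal ‖γ u - γ s‖ ≤ (μH[1] : Measure E2) (γ '' Ioc s u) := by
  have h1 : LipschitzWith 1 (fun x : E2 => dist x (γ s)) := LipschitzWith.dist_left _
  have h2 := h1.hausdorffMeasure_image_le (d := 1) zero_le_one (γ '' Ioc s u)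
  have h3 : Ioc (dist (γ s) (γ s)) (dist (γ u) (γ s)) ⊆
      (fun x : E2 => dist x (γ s)) '' (γ '' Ioc s u) := by
    rw [image_image]
    exact intermediate_value_Ioc (f := fun t => dist (γ t) (γ s)) hsu (by fun_prop)
  have h4 := measure_mono (μ := (μH[1] : Measure ℝ)) h3
  rw [hausdorffMeasure_real] at h2 h4
  simp only [dist_self, Real.volume_Ioc, sub_zero, dist_eq_norm] at h4
  simp only [dist_eq_norm] at h2
  refine h4.trans (h2.trans ?_)
  simp

lemma gb_len_upper {γ γ' : ℝ → E2} {s u C : ℝ} (hC : 0 ≤ C)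
    (hγ : ∀ t, HasDerivAt γ (γ' t) t) (hb : ∀ t ∈ Icc s u, ‖γ' t‖ ≤ C) :
    (μH[1] : Measure E2) (γ '' Ioc s u) ≤ ENNReal.ofReal (C * (u - s)) := by
  have h1 : LipschitzOnWith C.toNNReal γ (Icc s u) := by
    refine (convex_Icc s u).lipschitzOnWith_of_nnnorm_hasDerivWithin_le
      (fun t _ => (hγ t).hasDerivWithinAt) (fun t ht => ?_)
    rw [← NNReal.coe_le_coe, Real.coe_toNNReal _ hC]
    exact hb t ht
  have h2 := (h1.mono Ioc_subset_Icc_self).hausdorffMeasure_image_le (d := 1) zero_le_one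
  rw [hausdorffMeasure_real, Real.volume_Ioc] at h2
  refine h2.trans ?_
  rw [ENNReal.ofReal_mul hC]
  simp [ENNReal.ofReal]

lemma gb_len {γ γ' : ℝ → E2} {a b : ℝ} (hab : a ≤ b)
    (hγ : ∀ t, HasDerivAt γ (γ' t) t) (hc : Continuous γ') (hinj : InjOn γ (Ioc a b)) :
    (μH[1] : Measure E2) (γ '' Ioc a b) = ENNReal.ofReal (∫ t in a..b, ‖γ' t‖) := by
  have hγc : Continuous γ := continuous_iff_continuousAt.2 fun t => (hγ t).continuousAt
  obtain ⟨C, hC⟩ := (isCompact_Icc (a := a) (b := b)).exists_bound_of_continuousOn hc.continuousOn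
  have hC0 : 0 ≤ C := (norm_nonneg _).trans (hC a ⟨le_rfl, hab⟩)
  have hfin : ∀ s u, a ≤ s → s ≤ u → u ≤ b → (μH[1] : Measure E2) (γ '' Ioc s u) ≠ ∞ := by
    intro s u h1 h2 h3
    exact ((gb_len_upper hC0 hγ fun t ht => hC t ⟨h1.trans ht.1, ht.2.trans h3⟩).trans_lt
      ENNReal.ofReal_lt_top).ne
  set F : ℝ → ℝ := fun t => ((μH[1] : Measure E2) (γ '' Ioc a t)).toReal with hF
  have hmeas : ∀ s u, a ≤ s → u ≤ b → MeasurableSet (γ '' Ioc s u) := by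
    intro s u h1 h2
    exact measurableSet_Ioc.image_of_continuousOn_injOn hγc.continuousOn
      (hinj.mono (Ioc_subset_Ioc h1 h2))
  have hadd : ∀ s u, a ≤ s → s ≤ u → u ≤ b →
      F u - F s = ((μH[1] : Measure E2) (γ '' Ioc s u)).toReal := by
    intro s u h1 h2 h3
    have : γ '' Ioc a u = γ '' Ioc a s ∪ γ '' Ioc s u := by
      rw [← image_union, Ioc_union_Ioc_eq_Ioc h1 h2]
    have hd : Disjoint (γ '' Ioc a s) (γ '' Ioc s u) := by
      rw [disjoint_left]
      rintro _ ⟨x, hx, rfl⟩ ⟨y, hy, hxy⟩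
      have := hinj (Ioc_subset_Ioc h1 h3 hy) (Ioc_subset_Ioc le_rfl (h2.trans h3) hx) hxy
      linarith [hx.2, hy.1]
    simp only [hF]
    rw [this, measure_union hd (hmeas _ _ h1 h3),
      ENNReal.toReal_add (hfin _ _ le_rfl h1 (h2.trans h3)) (hfin _ _ h1 h2 h3)]
    ring
  have hup : ∀ s u D, a ≤ s → s ≤ u → u ≤ b → 0 ≤ D → (∀ t ∈ Icc s u, ‖γ' t‖ ≤ D) →
      F u - F s ≤ D * (u - s) := by
    intro s u D h1 h2 h3 hD h4
    rw [hadd s u h1 h2 h3]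
    exact ENNReal.toReal_le_of_le_ofReal (mul_nonneg hD (by linarith)) (gb_len_upper hD hγ h4)
  have hlo : ∀ s u, a ≤ s → s ≤ u → u ≤ b → ‖γ u - γ s‖ ≤ F u - F s := by
    intro s u h1 h2 h3
    rw [hadd s u h1 h2 h3]
    exact (ENNReal.ofReal_le_iff_le_toReal (hfin _ _ h1 h2 h3)).1 (gb_len_lower h2 hγc)
  have hcont : ContinuousOn F (Icc a b) := by
    have : LipschitzOnWith C.toNNReal F (Icc a b) := by
      refine LipschitzOnWith.of_le_add_mul _ fun x hx y hy => ?_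
      rw [Real.coe_toNNReal _ hC0, Real.dist_eq]
      rcases le_total x y with h | h
      · have := hlo x y hx.1 h hy.2
        have h0 := norm_nonneg (γ y - γ x)
        have : 0 ≤ C * |x - y| := by positivity
        linarith
      · have := hup y x C hy.1 h hx.2 hC0 fun t ht => hC t ⟨hy.1.trans ht.1, ht.2.trans hx.2⟩
        rw [abs_of_nonneg (by linarith)]
        linarith
    exact this.continuousOn
  have hder : ∀ t ∈ Ioo a b, HasDerivAt F ‖γ' t‖ t := by
    intro t ht
    rw [hasDerivAt_iff_isLittleO, Asymptotics.isLittleO_iff]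
    intro ε hε
    obtain ⟨δ, hδ, hball⟩ := Metric.continuousAt_iff.1 (hc.continuousAt (x := t)) ε hε
    have key : ∀ s u, a ≤ s → s ≤ u → u ≤ b → |s - t| < δ → |u - t| < δ →
        |F u - F s - (u - s) * ‖γ' t‖| ≤ ε * (u - s) := by
      intro s u h1 h2 h3 h4 h5
      rw [abs_lt] at h4 h5
      have hI : ∀ x ∈ Icc s u, ‖γ' x - γ' t‖ ≤ ε := by
        intro x hx
        have : dist x t < δ := by
          rw [Real.dist_eq, abs_lt]; constructor <;> linarith [hx.1, hx.2]
        have := hball this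
        rw [dist_eq_norm] at this
        exact this.le
      have hA := hup s u (‖γ' t‖ + ε) h1 h2 h3 (by positivity) fun x hx => by
        have h6 := norm_add_le (γ' t) (γ' x - γ' t)
        rw [add_sub_cancel] at h6
        linarith [hI x hx]
      have hB := hlo s u h1 h2 h3
      have hD := (convex_Icc s u).norm_image_sub_le_of_norm_hasDerivWithin_le
        (f := fun x => γ x - x • γ' t) (f' := fun x => γ' x - γ' t) (C := ε) (x := s) (y := u)
        (fun x _ => by
          have := (hγ x).sub ((hasDerivAt_id x).smul_const (γ' t))
          simp only [one_smul] at this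
          exact this.hasDerivWithinAt) hI ⟨le_rfl, h2⟩ ⟨h2, le_rfl⟩
      have h7 : ‖(u - s) • γ' t‖ = (u - s) * ‖γ' t‖ := by
        rw [norm_smul, Real.norm_of_nonneg (by linarith)]
      have h8 : γ u - u • γ' t - (γ s - s • γ' t) = (γ u - γ s) - (u - s) • γ' t := by
        module
      rw [h8, Real.norm_of_nonneg (by linarith : 0 ≤ u - s)] at hD
      have h9 := norm_sub_norm_le ((u - s) • γ' t) (γ u - γ s)
      rw [norm_sub_rev ((u - s) • γ' t)] at h9
      rw [abs_le]
      constructor <;> nlinarith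
    have e1 : ∀ᶠ x in nhds t, x ∈ Ioo a b := isOpen_Ioo.mem_nhds ht
    filter_upwards [e1, Metric.ball_mem_nhds t hδ] with x hx hxd
    rw [Metric.mem_ball, Real.dist_eq] at hxd
    rw [smul_eq_mul, Real.norm_eq_abs, Real.norm_eq_abs]
    rcases le_total x t with h | h
    · have := key x t hx.1.le h ht.2.le hxd (by simpa using hδ)
      rw [abs_sub_comm x t, abs_of_nonneg (by linarith : 0 ≤ t - x), ← abs_neg]
      convert this using 2
      ring
    · have := key t x ht.1.le h hx.2.le (by simpa using hδ) hxd
      rwa [abs_of_nonneg (by linarith : 0 ≤ x - t)]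
  have hIntg := intervalIntegral.integral_eq_sub_of_hasDerivAt_of_le hab hcont hder
    (hc.norm.intervalIntegrable _ _)
  have hFa : F a = 0 := by simp [hF]
  rw [hIntg, hFa, sub_zero, hF, ENNReal.ofReal_toReal (hfin _ _ le_rfl hab le_rfl)]

lemma gb_curve_integral {γ γ' : ℝ → E2} {a b : ℝ}
    (hγ : ∀ t, HasDerivAt γ (γ' t) t) (hc : Continuous γ')
    {S : Set E2} (hS : MeasurableSet S) {ang : E2 → ℝ} (hang : Measurable ang)
    (h1 : ∀ x ∈ S, ang x ∈ Ioc a b ∧ γ (ang x) = x)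
    (h2 : ∀ t ∈ Ioc a b, γ t ∈ S ∧ ang (γ t) = t)
    (hab : a ≤ b) (g : E2 → ℝ) (hg : Continuous fun t => g (γ t)) :
    ∫ x in S, g x ∂(μH[1] : Measure E2) = ∫ t in a..b, g (γ t) * ‖γ' t‖ := by
  have hinj : InjOn γ (Ioc a b) := by
    intro x hx y hy hxy
    rw [← (h2 x hx).2, hxy, (h2 y hy).2]
  have hle : Measurable fun t => ‖γ' t‖₊ := hc.nnnorm.measurable
  have hmap : Measure.map ang ((μH[1] : Measure E2).restrict S) =
      (volume.restrict (Ioc a b)).withDensity (fun t => (‖γ' t‖₊ : ℝ≥0∞)) := by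
    have hI : ∀ u v, Measure.map ang ((μH[1] : Measure E2).restrict S) (Ioc u v) =
        ENNReal.ofReal (∫ t in Ioc (max u a) (min v b), ‖γ' t‖) := by
      intro u v
      have hII : Ioc u v ∩ Ioc a b = Ioc (max u a) (min v b) := Ioc_inter_Ioc
      rw [Measure.map_apply hang measurableSet_Ioc,
        Measure.restrict_apply (hang measurableSet_Ioc)]
      have : ang ⁻¹' Ioc u v ∩ S = γ '' Ioc (max u a) (min v b) := by
        ext x
        constructor
        · rintro ⟨hx, hxS⟩
          refine ⟨ang x, ?_, (h1 x hxS).2⟩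
          rw [← hII]
          exact ⟨hx, (h1 x hxS).1⟩
        · rintro ⟨t, ht, rfl⟩
          rw [← hII] at ht
          refine ⟨?_, (h2 t ht.2).1⟩
          rw [mem_preimage, (h2 t ht.2).2]
          exact ht.1
      rw [this]
      rcases le_total (max u a) (min v b) with h | h
      · rw [gb_len h hγ hc (hinj.mono (Ioc_subset_Ioc (le_max_right _ _) (min_le_right _ _))),
          intervalIntegral.integral_of_le h]
      · simp [Ioc_eq_empty_of_le h]
    refine Measure.ext_of_Ioc' _ _ (fun u v _ => ?_) (fun u v _ => ?_)
    · rw [hI]; exact ENNReal.ofReal_ne_top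
    · have hII : Ioc u v ∩ Ioc a b = Ioc (max u a) (min v b) := Ioc_inter_Ioc
      rw [hI, withDensity_apply _ measurableSet_Ioc, Measure.restrict_restrict measurableSet_Ioc,
        hII, ofReal_integral_eq_lintegral_ofReal]
      · refine lintegral_congr fun t => ?_
        rw [ofReal_norm]; rfl
      · exact (hc.norm.integrableOn_Icc).mono_set Ioc_subset_Icc_self
      · exact Filter.Eventually.of_forall fun t => norm_nonneg _
  calc ∫ x in S, g x ∂(μH[1] : Measure E2)
      = ∫ x in S, g (γ (ang x)) ∂(μH[1] : Measure E2) := by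
        refine setIntegral_congr_fun hS fun x hx => ?_
        simp only [(h1 x hx).2]
    _ = ∫ t, g (γ t) ∂(Measure.map ang ((μH[1] : Measure E2).restrict S)) := by
        rw [integral_map hang.aemeasurable hg.aestronglyMeasurable]
    _ = ∫ t in Ioc a b, ‖γ' t‖₊ • g (γ t) := by
        rw [hmap, integral_withDensity_eq_integral_smul hle]
    _ = _ := by
        rw [intervalIntegral.integral_of_le hab]
        refine integral_congr_ae (Filter.Eventually.of_forall fun t => ?_)
        simp only [NNReal.smul_def, coe_nnnorm, smul_eq_mul]
        ring

/-- The unit vector at angle `t`. -/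
def gbE (t : ℝ) : E2 := !₂[Real.cos t, Real.sin t]

@[simp] lemma gbE_zero (t : ℝ) : gbE t 0 = Real.cos t := rfl

@[simp] lemma gbE_one (t : ℝ) : gbE t 1 = Real.sin t := rfl

lemma gbE_contDiff : ContDiff ℝ 2 gbE := by
  rw [contDiff_piLp]
  intro i
  fin_cases i
  · exact Real.contDiff_cos
  · exact Real.contDiff_sin

lemma gbE_periodic (t : ℝ) : gbE (t + 2 * Real.pi) = gbE t := by
  simp [gbE]

lemma gbE_ne (t : ℝ) : gbE t ≠ 0 := by
  intro h
  have h0 : Real.cos t = 0 := by simpa using congrArg (fun v : E2 => v 0) h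
  have h1 : Real.sin t = 0 := by simpa using congrArg (fun v : E2 => v 1) h
  have := Real.sin_sq_add_cos_sq t
  rw [h0, h1] at this
  norm_num at this

/-- The angle of a vector. -/
def gbArg (x : E2) : ℝ := Complex.arg ⟨x 0, x 1⟩

lemma gbArg_meas : Measurable gbArg := by
  refine Complex.measurable_arg.comp ?_
  have : (fun x : E2 => (⟨x 0, x 1⟩ : ℂ)) = fun x : E2 => ((x 0 : ℂ) + (x 1 : ℂ) * Complex.I) := by
    funext x
    exact Complex.mk_eq_add_mul_I _ _
  rw [this]
  have h0 : Continuous fun x : E2 => ((x 0 : ℂ) + (x 1 : ℂ) * Complex.I) := by fun_prop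
  exact h0.measurable

lemma gb_norm_arg (x : E2) : ‖x‖ • gbE (gbArg x) = x := by
  have hn : ‖(⟨x 0, x 1⟩ : ℂ)‖ = ‖x‖ := by
    rw [EuclideanSpace.norm_eq, Complex.norm_def, Complex.normSq_mk]
    simp [Fin.sum_univ_two, sq]
  ext i
  fin_cases i
  · have := Complex.norm_mul_cos_arg ⟨x 0, x 1⟩
    rw [hn] at this
    simpa [gbArg] using this
  · have := Complex.norm_mul_sin_arg ⟨x 0, x 1⟩
    rw [hn] at this
    simpa [gbArg] using this

lemma gbArg_mem (x : E2) : gbArg x ∈ Ioc (-Real.pi) Real.pi := Complex.arg_mem_Ioc _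

lemma gbArg_smul {r t : ℝ} (hr : 0 < r) (ht : t ∈ Ioc (-Real.pi) Real.pi) :
    gbArg (r • gbE t) = t := by
  have h := Complex.arg_mul_cos_add_sin_mul_I hr ht
  refine Eq.trans ?_ h
  rw [gbArg]
  congr 1
  apply Complex.ext <;> simp [Complex.cos_ofReal_re, Complex.sin_ofReal_re]

lemma gb_implicit {f : ℝ × ℝ → ℝ} (hf : ContDiff ℝ 2 f) {r : ℝ → ℝ} (hr : Continuous r)
    (h0 : ∀ t, f (t, r t) = 0) (h1 : ∀ t, fderiv ℝ f (t, r t) (0, 1) ≠ 0) : ContDiff ℝ 2 r := by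
  rw [contDiff_iff_contDiffAt]
  intro t
  have cdf : ContDiffAt ℝ 2 f (t, r t) := hf.contDiffAt
  have if2 : (fderiv ℝ f (t, r t) ∘L .inr ℝ ℝ ℝ).IsInvertible := by
    refine ⟨ContinuousLinearEquiv.unitsEquivAut ℝ (Units.mk0 _ (h1 t)), ?_⟩
    ext
    simp
  have h2 := cdf.contDiffAt_implicitFunction two_ne_zero if2
  refine h2.congr_of_eventuallyEq ?_
  have h3 := cdf.eventually_apply_eq_iff_implicitFunction two_ne_zero if2
  have h4 : Filter.Tendsto (fun s => (s, r s)) (nhds t) (nhds (t, r t)) :=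
    (continuous_id.prodMk hr).continuousAt
  filter_upwards [h4.eventually h3] with s hs
  exact (hs.1 (by rw [h0, h0])).symm

lemma gb_boundary
    (K : Set E2) (hKo : IsOpen K) (hKb : Bornology.IsBounded K) (hKc : Convex ℝ K)
    (φ : E2 → ℝ) (hφ : ContDiff ℝ 2 φ) (hKφ : K = {x | φ x < 0})
    (hfr : frontier K = {x | φ x = 0})
    (hgrad : ∀ x ∈ frontier K, fderiv ℝ φ x ≠ 0) (x0 : E2) (hx0 : x0 ∈ K) :
    ∃ r : ℝ → ℝ, ContDiff ℝ 2 r ∧ (∀ t, 0 < r t) ∧ (∀ t, r (t + 2 * Real.pi) = r t) ∧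
      (∀ t, ∀ s, 0 ≤ s → (x0 + s • gbE t ∈ frontier K ↔ s = r t)) ∧
      ∀ t, 0 < fderiv ℝ φ (x0 + r t • gbE t) (gbE t) := by
  set s : Set E2 := (Homeomorph.addLeft x0) ⁻¹' K with hs
  have hso : IsOpen s := hKo.preimage (Homeomorph.continuous _)
  have hs0 : s ∈ nhds (0 : E2) := hso.mem_nhds (by simpa [hs] using hx0)
  have hsc : Convex ℝ s := hKc.translate_preimage_right x0
  have hsb : Bornology.IsVonNBounded ℝ s := by
    rw [NormedSpace.isVonNBounded_iff]
    have : s = (fun x => -x0 + x) '' K := by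
      ext v; simp [hs]
    rw [this]
    exact hKb.vadd (-x0)
  have hsf : ∀ v, x0 + v ∈ frontier K ↔ gauge s v = 1 := by
    intro v
    rw [gauge_eq_one_iff_mem_frontier hsc hs0, hs, ← Homeomorph.preimage_frontier]
    rfl
  have hgpos : ∀ t, 0 < gauge s (gbE t) := fun t =>
    (gauge_pos (absorbent_nhds_zero hs0) hsb).2 (gbE_ne t)
  have hgc : Continuous fun t => gauge s (gbE t) :=
    (continuous_gauge hsc hs0).comp gbE_contDiff.continuous
  have hiff : ∀ t, ∀ q, 0 ≤ q → (x0 + q • gbE t ∈ frontier K ↔ q = (gauge s (gbE t))⁻¹) := by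
    intro t q hq
    rw [hsf, gauge_smul_of_nonneg hq, smul_eq_mul, mul_eq_one_iff_eq_inv₀ (hgpos t).ne']
  have hsupp : ∀ x ∈ frontier K, ∀ y ∈ K, fderiv ℝ φ x (y - x) ≤ 0 := by
    intro x hx y hy
    have hd : HasDerivAt (fun q : ℝ => φ (x + q • (y - x))) (fderiv ℝ φ x (y - x)) 0 := by
      have h1 : HasFDerivAt φ (fderiv ℝ φ x) (x + (0 : ℝ) • (y - x)) := by
        simpa using (hφ.differentiable two_ne_zero x).hasFDerivAt
      have h2 : HasDerivAt (fun q : ℝ => x + q • (y - x)) (y - x) 0 := by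
        simpa using ((hasDerivAt_id (0 : ℝ)).smul_const (y - x)).const_add x
      exact h1.comp_hasDerivAt 0 h2
    have hsl := hd.tendsto_slope_zero_right
    refine le_of_tendsto hsl ?_
    filter_upwards [Ioo_mem_nhdsGT (zero_lt_one' ℝ)] with q hq
    have hx' : φ x = 0 := by rw [hfr] at hx; exact hx
    have hmem : x + q • (y - x) ∈ K := by
      have := hKc.add_smul_sub_mem_interior' (frontier_subset_closure hx)
        (hKo.interior_eq.symm ▸ hy) ⟨hq.1, hq.2.le⟩
      exact interior_subset this
    rw [hKφ] at hmem
    have hmem' : φ (x + q • (y - x)) < 0 := hmem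
    simp only [zero_add, zero_smul, add_zero, hx', sub_zero, smul_eq_mul]
    exact mul_nonpos_of_nonneg_of_nonpos (inv_nonneg.2 hq.1.le) hmem'.le
  have htr0 : ∀ x ∈ frontier K, 0 < fderiv ℝ φ x (x - x0) := by
    intro x hx
    obtain ⟨v, hv⟩ : ∃ v, 0 < fderiv ℝ φ x v := by
      obtain ⟨v, hv⟩ := DFunLike.ne_iff.1 (hgrad x hx)
      rcases lt_or_gt_of_ne hv with h | h
      · exact ⟨-v, by rw [map_neg]; simpa using h⟩
      · exact ⟨v, h⟩
    have hev : ∀ᶠ q in nhdsWithin (0 : ℝ) (Ioi 0), x0 + q • v ∈ K := by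
      have : Filter.Tendsto (fun q : ℝ => x0 + q • v) (nhdsWithin 0 (Ioi 0)) (nhds x0) := by
        have h : Continuous (fun q : ℝ => x0 + q • v) := by fun_prop
        have := h.tendsto 0
        simp only [zero_smul, add_zero] at this
        exact this.mono_left nhdsWithin_le_nhds
      exact this.eventually (hKo.mem_nhds hx0)
    obtain ⟨q, hqK, hq⟩ := (hev.and self_mem_nhdsWithin).exists
    have h1 := hsupp x hx _ hqK
    have h2 : x0 + q • v - x = q • v - (x - x0) := by abel
    rw [h2, map_sub, map_smul, smul_eq_mul] at h1
    have : 0 < q * fderiv ℝ φ x v := mul_pos hq hv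
    linarith
  set r : ℝ → ℝ := fun t => (gauge s (gbE t))⁻¹ with hr
  have hrpos : ∀ t, 0 < r t := fun t => inv_pos.2 (hgpos t)
  have hmem : ∀ t, x0 + r t • gbE t ∈ frontier K := fun t => (hiff t _ (hrpos t).le).2 rfl
  have htr : ∀ t, 0 < fderiv ℝ φ (x0 + r t • gbE t) (gbE t) := by
    intro t
    have := htr0 _ (hmem t)
    rw [add_sub_cancel_left, map_smul, smul_eq_mul] at this
    exact pos_of_mul_pos_right this (hrpos t).le
  refine ⟨r, ?_, hrpos, fun t => by simp only [hr, gbE_periodic], hiff, htr⟩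
  have hfc : ContDiff ℝ 2 (fun p : ℝ × ℝ => φ (x0 + p.2 • gbE p.1)) := by
    refine hφ.comp (contDiff_const.add (contDiff_snd.smul (gbE_contDiff.comp contDiff_fst)))
  refine gb_implicit hfc (hgc.inv₀ fun t => (hgpos t).ne') (fun t => ?_) (fun t => ?_)
  · have := hmem t
    rw [hfr] at this
    exact this
  · have h1 : HasFDerivAt (fun p : ℝ × ℝ => φ (x0 + p.2 • gbE p.1)) _ (t, r t) :=
      (hfc.differentiable two_ne_zero _).hasFDerivAt
    have h2 : HasDerivAt (fun q : ℝ => (t, q)) ((0 : ℝ), (1 : ℝ)) (r t) :=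
      (hasDerivAt_const _ _).prodMk (hasDerivAt_id _)
    have h3 := h1.comp_hasDerivAt (r t) h2
    have h4 : HasDerivAt (fun q : ℝ => x0 + q • gbE t) (gbE t) (r t) := by
      simpa using ((hasDerivAt_id (r t)).smul_const (gbE t)).const_add x0
    have h5 := ((hφ.differentiable two_ne_zero (x0 + r t • gbE t)).hasFDerivAt).comp_hasDerivAt _ h4
    rw [h3.unique h5]
    exact (htr t).ne'

lemma gb_angle {n0 n1 d0 d1 : ℝ → ℝ} (h0 : ∀ t, HasDerivAt n0 (d0 t) t)
    (h1 : ∀ t, HasDerivAt n1 (d1 t) t) (c0 : Continuous d0) (c1 : Continuous d1)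
    (hpos : ∀ t, 0 < n0 t * Real.cos t + n1 t * Real.sin t)
    (hp0 : n0 Real.pi = n0 (-Real.pi)) (hp1 : n1 Real.pi = n1 (-Real.pi))
    (F : E2 → ℝ) (hFc : ContinuousOn F {0}ᶜ) (hFh : ∀ s : ℝ, 0 < s → ∀ x, F (s • x) = F x) :
    ∫ t in (-Real.pi)..Real.pi,
        F !₂[n0 t, n1 t] * ((n0 t * d1 t - n1 t * d0 t) / (n0 t ^ 2 + n1 t ^ 2)) =
      ∫ t in (-Real.pi)..Real.pi, F (gbE t) := by
  set A : ℝ → ℝ := fun t => n0 t * Real.cos t + n1 t * Real.sin t with hA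
  set B : ℝ → ℝ := fun t => -n0 t * Real.sin t + n1 t * Real.cos t with hB
  set N : ℝ → ℝ := fun t => n0 t ^ 2 + n1 t ^ 2 with hN
  have hAB : ∀ t, A t ^ 2 + B t ^ 2 = N t := by
    intro t
    simp only [hA, hB, hN]
    linear_combination (n0 t ^ 2 + n1 t ^ 2) * Real.sin_sq_add_cos_sq t
  have hA0 : ∀ t, A t ≠ 0 := fun t => (hpos t).ne'
  have hNpos : ∀ t, 0 < N t := fun t => by
    rw [← hAB]; have : 0 < A t := hpos t; positivity
  have n0c : Continuous n0 := continuous_iff_continuousAt.2 fun t => (h0 t).continuousAt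
  have n1c : Continuous n1 := continuous_iff_continuousAt.2 fun t => (h1 t).continuousAt
  set ψ : ℝ → ℝ := fun t => t + Real.arctan (B t / A t) with hψ
  set ψ' : ℝ → ℝ := fun t => (n0 t * d1 t - n1 t * d0 t) / N t with hψ'
  have hder : ∀ t, HasDerivAt ψ (ψ' t) t := by
    intro t
    have hdA : HasDerivAt A (d0 t * Real.cos t + d1 t * Real.sin t + B t) t := by
      have := ((h0 t).mul (Real.hasDerivAt_cos t)).add ((h1 t).mul (Real.hasDerivAt_sin t))
      refine this.congr_deriv ?_
      simp only [hB]; ring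
    have hdB : HasDerivAt B (-d0 t * Real.sin t + d1 t * Real.cos t - A t) t := by
      have := ((h0 t).neg.mul (Real.hasDerivAt_sin t)).add ((h1 t).mul (Real.hasDerivAt_cos t))
      refine this.congr_deriv ?_
      simp only [hA, Pi.neg_apply]; ring
    have := (hasDerivAt_id t).add ((hdB.div hdA (hA0 t)).arctan)
    refine this.congr_deriv ?_
    have hn := (hNpos t).ne'
    have e1 : 1 + (B t / A t) ^ 2 = N t / A t ^ 2 := by
      rw [← hAB]; field_simp [hA0 t]
    have e2 : (-d0 t * Real.sin t + d1 t * Real.cos t - A t) * A t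
        - B t * (d0 t * Real.cos t + d1 t * Real.sin t + B t)
        = (n0 t * d1 t - n1 t * d0 t) - N t := by
      rw [← hAB]
      simp only [hA, hB]
      linear_combination (n0 t * d1 t - n1 t * d0 t) * Real.sin_sq_add_cos_sq t
    rw [Pi.div_apply, e1, e2]
    simp only [hψ']
    have := hA0 t
    field_simp
    ring
  have hψc : Continuous ψ' := by
    have : ∀ t, N t ≠ 0 := fun t => (hNpos t).ne'
    have hNc : Continuous N := by fun_prop
    exact Continuous.div (by fun_prop) hNc this
  have hdir : ∀ t, !₂[n0 t, n1 t] = Real.sqrt (N t) • gbE (ψ t) := by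
    intro t
    have e1 : Real.sqrt (1 + (B t / A t) ^ 2) = Real.sqrt (N t) / A t := by
      have : 1 + (B t / A t) ^ 2 = N t / A t ^ 2 := by
        rw [← hAB]; field_simp [hA0 t]
      rw [this, Real.sqrt_div (hNpos t).le, Real.sqrt_sq (hpos t).le]
    have hsq : Real.sqrt (N t) ≠ 0 := (Real.sqrt_pos.2 (hNpos t)).ne'
    have ec : Real.cos (Real.arctan (B t / A t)) = A t / Real.sqrt (N t) := by
      rw [Real.cos_arctan, e1, one_div_div]
    have es : Real.sin (Real.arctan (B t / A t)) = B t / Real.sqrt (N t) := by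
      rw [Real.sin_arctan, e1]
      have := hA0 t
      field_simp
    ext i
    fin_cases i
    · simp only [PiLp.smul_apply, hψ]
      simp [Real.cos_add, ec, es]
      field_simp
      simp only [hA, hB]
      linear_combination - n0 t * Real.sin_sq_add_cos_sq t
    · simp only [PiLp.smul_apply, hψ]
      simp [Real.sin_add, ec, es]
      field_simp
      simp only [hA, hB]
      linear_combination - n1 t * Real.sin_sq_add_cos_sq t
  have hFE : Continuous fun t => F (gbE t) := by
    have h := hFc.comp (s := univ) gbE_contDiff.continuous.continuousOn
      (fun t _ => gbE_ne t)
    exact continuousOn_univ.1 h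
  have hper : Function.Periodic (fun t => F (gbE t)) (2 * Real.pi) := by
    intro t
    simp only [gbE_periodic]
  have hend : ψ Real.pi = ψ (-Real.pi) + 2 * Real.pi := by
    simp only [hψ, hA, hB, Real.cos_pi, Real.sin_pi, Real.cos_neg, Real.sin_neg, hp0, hp1]
    ring_nf
  have step1 : ∀ t, F !₂[n0 t, n1 t] * ((n0 t * d1 t - n1 t * d0 t) / (n0 t ^ 2 + n1 t ^ 2)) =
      ((fun s => F (gbE s)) ∘ ψ) t * ψ' t := by
    intro t
    rw [hdir, hFh _ (Real.sqrt_pos.2 (hNpos t))]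
    rfl
  simp_rw [step1]
  rw [intervalIntegral.integral_comp_mul_deriv (fun t _ => hder t) hψc.continuousOn hFE, hend,
    hper.intervalIntegral_add_eq (ψ (-Real.pi)) (-Real.pi)]
  congr 1
  ring

lemma gb_fderiv_apply (f : E2 → ℝ) (x v : E2) :
    fderiv ℝ f x v = v 0 * pd f 0 x + v 1 * pd f 1 x := by
  have hv : v = v 0 • EuclideanSpace.single (0 : Fin 2) (1 : ℝ)
      + v 1 • EuclideanSpace.single (1 : Fin 2) (1 : ℝ) := by
    ext i; fin_cases i <;> simp
  conv_lhs => rw [hv]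
  rw [map_add, map_smul, map_smul]
  rfl

lemma gb_gradient_apply (f : E2 → ℝ) (x : E2) (i : Fin 2) : gradient f x i = pd f i x := by
  have h : ⟪gradient f x, EuclideanSpace.single i (1 : ℝ)⟫ = pd f i x := by
    rw [gradient, InnerProductSpace.toDual_symm_apply]
    rfl
  rw [← h, EuclideanSpace.inner_single_right]
  simp

lemma gb_pd_smul {f : E2 → ℝ} {t c : ℝ} (ht : t ≠ 0) (h : ∀ x, f (t • x) = c * f x)
    (i : Fin 2) (x : E2) : pd f i (t • x) = c / t * pd f i x := by
  have h1 : fderiv ℝ (fun y => f (t • y)) x = t • fderiv ℝ f (t • x) := fderiv_comp_smul t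
  have h2 : (fun y => f (t • y)) = c • f := by
    funext y; simp [h]
  rw [h2, fderiv_const_smul_field] at h1
  have h3 := congrArg (fun L : E2 →L[ℝ] ℝ => L (EuclideanSpace.single i 1)) h1
  simp only [Pi.smul_apply, smul_apply, smul_eq_mul] at h3
  simp only [pd]
  field_simp
  linarith

lemma gb_pd_neg (f : E2 → ℝ) (i : Fin 2) : pd (fun y => -f y) i = fun y => -pd f i y := by
  funext x
  simp only [pd]
  have : fderiv ℝ (fun y => -f y) x = -fderiv ℝ f x := fderiv_neg
  rw [this]
  rfl

lemma gb_hessian_neg (f : E2 → ℝ) (x : E2) (i j : Fin 2) :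
    hessian (fun y => -f y) x i j = -hessian f x i j := by
  simp only [hessian, Matrix.of_apply, gb_pd_neg]

lemma gb_euler {f : E2 → ℝ} {x : E2} (hf : DifferentiableAt ℝ f x) {g : ℝ → ℝ} {g' : ℝ}
    (hg : HasDerivAt g g' 1) (h : ∀ t : ℝ, 0 < t → f (t • x) = g t) :
    x 0 * pd f 0 x + x 1 * pd f 1 x = g' := by
  rw [← gb_fderiv_apply]
  have h1 : HasFDerivAt f (fderiv ℝ f x) ((1 : ℝ) • x) := by simpa using hf.hasFDerivAt
  have h2 : HasDerivAt (fun t : ℝ => t • x) x 1 := by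
    simpa using (hasDerivAt_id (1 : ℝ)).smul_const x
  have h3 := h1.comp_hasDerivAt 1 h2
  refine h3.unique (hg.congr_of_eventuallyEq ?_)
  filter_upwards [lt_mem_nhds (zero_lt_one' ℝ)] with t ht
  exact h t ht

lemma gb_hessian_symm {f : E2 → ℝ} {x : E2} (hf : ContDiffAt ℝ 2 f x) (i j : Fin 2) :
    hessian f x i j = hessian f x j i := by
  have hs := hf.isSymmSndFDerivAt (by simp)
  have hd : DifferentiableAt ℝ (fderiv ℝ f) x :=
    (hf.fderiv_right (m := 1) (by norm_num)).differentiableAt one_ne_zero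
  have key : ∀ i j, hessian f x i j =
      fderiv ℝ (fderiv ℝ f) x (EuclideanSpace.single i 1) (EuclideanSpace.single j 1) := by
    intro i j
    simp only [hessian, Matrix.of_apply, pd]
    have h1 : HasFDerivAt (fun y => fderiv ℝ f y (EuclideanSpace.single j 1)) _ x :=
      hd.hasFDerivAt.clm_apply (hasFDerivAt_const _ _)
    have h2 : HasFDerivAt (pd f j) _ x := h1
    rw [h2.fderiv]
    simp
  rw [key, key]
  exact hs _ _

lemma gb_pd_contDiff {f : E2 → ℝ} {U : Set E2} (hU : IsOpen U) (hf : ContDiffOn ℝ 2 f U)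
    (i : Fin 2) : ContDiffOn ℝ 1 (pd f i) U :=
  (hf.fderiv_of_isOpen hU (m := 1) (by norm_num)).clm_apply contDiffOn_const

lemma gb_hessian_cont {f : E2 → ℝ} {U : Set E2} (hU : IsOpen U) (hf : ContDiffOn ℝ 2 f U)
    (i j : Fin 2) : ContinuousOn (fun x => hessian f x i j) U :=
  ((gb_pd_contDiff hU hf j).continuousOn_fderiv_of_isOpen hU le_rfl).clm_apply
    continuousOn_const

namespace IsAnisoNorm

variable {H : E2 → ℝ}

lemma gb_hess_smul (hH : IsAnisoNorm H) {t : ℝ} (ht : t ≠ 0) (x : E2) (i j : Fin 2) :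
    hessian H (t • x) i j = |t|⁻¹ * hessian H x i j := by
  simp only [hessian, Matrix.of_apply]
  rw [gb_pd_smul ht (fun x => gb_pd_smul ht (fun y => hH.homog t y) j x) i x]
  congr 1
  have : |t| ≠ 0 := abs_ne_zero.2 ht
  field_simp
  exact sq_abs t

lemma gb_diffAt (hH : IsAnisoNorm H) {x : E2} (hx : x ≠ 0) : ContDiffAt ℝ 2 H x :=
  hH.smooth.contDiffAt (isOpen_compl_singleton.mem_nhds hx)

lemma gb_pd_diffAt (hH : IsAnisoNorm H) {x : E2} (hx : x ≠ 0) (i : Fin 2) :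
    DifferentiableAt ℝ (pd H i) x :=
  ((gb_pd_contDiff isOpen_compl_singleton hH.smooth i).contDiffAt
    (isOpen_compl_singleton.mem_nhds hx)).differentiableAt one_ne_zero

lemma gb_eulerH (hH : IsAnisoNorm H) {x : E2} (hx : x ≠ 0) :
    x 0 * pd H 0 x + x 1 * pd H 1 x = H x := by
  refine gb_euler ((hH.gb_diffAt hx).differentiableAt two_ne_zero) (g := fun t => t * H x)
    (by simpa using (hasDerivAt_id (1 : ℝ)).mul_const (H x)) fun t ht => ?_
  rw [hH.homog, abs_of_pos ht]

lemma gb_null (hH : IsAnisoNorm H) {x : E2} (hx : x ≠ 0) (j : Fin 2) :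
    x 0 * hessian H x 0 j + x 1 * hessian H x 1 j = 0 := by
  refine gb_euler (hH.gb_pd_diffAt hx j) (g := fun t => pd H j x) (hasDerivAt_const _ _)
    fun t ht => ?_
  rw [gb_pd_smul ht.ne' (fun y => hH.homog t y) j x, abs_of_pos ht, div_self ht.ne', one_mul]

lemma gb_subadd (hH : IsAnisoNorm H) (x y : E2) : H (x + y) ≤ H x + H y := by
  have h := hH.convex.2 (mem_univ x) (mem_univ y) (by norm_num : (0 : ℝ) ≤ 1 / 2)
    (by norm_num : (0 : ℝ) ≤ 1 / 2) (by norm_num)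
  rw [← smul_add, hH.homog, abs_of_pos (by norm_num : (0 : ℝ) < 1 / 2)] at h
  simp only [smul_eq_mul] at h
  linarith

lemma gb_sub (hH : IsAnisoNorm H) {x : E2} (hx : x ≠ 0) (y : E2) :
    y 0 * pd H 0 x + y 1 * pd H 1 x ≤ H y := by
  rw [← gb_fderiv_apply]
  have h1 : HasFDerivAt H (fderiv ℝ H x) (x + (0 : ℝ) • y) := by
    simpa using ((hH.gb_diffAt hx).differentiableAt two_ne_zero).hasFDerivAt
  have h2 : HasDerivAt (fun t : ℝ => x + t • y) y 0 := by
    simpa using ((hasDerivAt_id (0 : ℝ)).smul_const y).const_add x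
  have h3 := (h1.comp_hasDerivAt 0 h2).tendsto_slope_zero_right
  refine le_of_tendsto h3 ?_
  filter_upwards [self_mem_nhdsWithin] with t ht
  have ht : 0 < t := ht
  have h4 := hH.gb_subadd x (t • y)
  rw [hH.homog, abs_of_pos ht] at h4
  simp only [Function.comp, zero_add, zero_smul, add_zero, smul_eq_mul]
  rw [inv_mul_le_iff₀ ht]
  linarith

lemma gb_pos (hH : IsAnisoNorm H) {x : E2} (hx : x ≠ 0) : 0 < H x := by
  obtain ⟨α, hα, h⟩ := hH.coercive
  exact (mul_pos hα (norm_pos_iff.2 hx)).trans_le (h x)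

lemma gb_polar_le (hH : IsAnisoNorm H) : ∃ C, 0 < C ∧ ∀ (v ξ : E2), ξ ≠ 0 →
    ⟪ξ, v⟫ / H ξ ≤ C * ‖v‖ := by
  obtain ⟨α, hα, h⟩ := hH.coercive
  refine ⟨α⁻¹, inv_pos.2 hα, fun v ξ hξ => ?_⟩
  rw [div_le_iff₀ (hH.gb_pos hξ)]
  calc ⟪ξ, v⟫ ≤ ‖ξ‖ * ‖v‖ := real_inner_le_norm _ _
    _ = α⁻¹ * ‖v‖ * (α * ‖ξ‖) := by field_simp
    _ ≤ _ := by gcongr; exact h ξ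

lemma gb_bdd (hH : IsAnisoNorm H) (v : E2) :
    BddAbove (range fun ξ : {ξ : E2 // ξ ≠ 0} => ⟪(ξ : E2), v⟫ / H ξ) := by
  obtain ⟨C, -, h⟩ := hH.gb_polar_le
  exact ⟨C * ‖v‖, by rintro _ ⟨ξ, rfl⟩; exact h v ξ ξ.2⟩

lemma gb_le_polar (hH : IsAnisoNorm H) (v : E2) {ξ : E2} (hξ : ξ ≠ 0) :
    ⟪ξ, v⟫ / H ξ ≤ polar H v :=
  le_ciSup (hH.gb_bdd v) ⟨ξ, hξ⟩

instance gb_nonempty : Nonempty {ξ : E2 // ξ ≠ 0} := ⟨⟨gbE 0, gbE_ne 0⟩⟩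

lemma gb_polar_smul (v : E2) {s : ℝ} (hs : 0 ≤ s) :
    polar H (s • v) = s * polar H v := by
  simp only [polar]
  rw [Real.mul_iSup_of_nonneg hs]
  congr 1
  funext ξ
  rw [inner_smul_right, mul_div_assoc]

lemma gb_polar_cont (hH : IsAnisoNorm H) : Continuous (polar H) := by
  obtain ⟨C, hC, h⟩ := hH.gb_polar_le
  have : LipschitzWith C.toNNReal (polar H) := by
    refine LipschitzWith.of_le_add_mul _ fun v w => ?_
    rw [Real.coe_toNNReal _ hC.le, dist_eq_norm]
    refine ciSup_le fun ξ => ?_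
    have h1 := h (v - w) ξ ξ.2
    have h2 := hH.gb_le_polar w ξ.2
    rw [inner_sub_right, sub_div] at h1
    linarith
  exact this.continuous

lemma gb_polar_pos (hH : IsAnisoNorm H) {v : E2} (hv : v ≠ 0) : 0 < polar H v := by
  refine lt_of_lt_of_le ?_ (hH.gb_le_polar v hv)
  have := hH.gb_pos hv
  rw [real_inner_self_eq_norm_sq]
  have := norm_pos_iff.2 hv
  positivity

lemma gb_inner (x y : E2) : ⟪x, y⟫ = x 0 * y 0 + x 1 * y 1 := by
  simp [PiLp.inner_apply, Fin.sum_univ_two]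
  ring

lemma gb_polar_grad (hH : IsAnisoNorm H) {x : E2} (hx : x ≠ 0) :
    polar H !₂[pd H 0 x, pd H 1 x] = 1 := by
  apply le_antisymm
  · refine ciSup_le fun ξ => ?_
    rw [div_le_one (hH.gb_pos ξ.2), gb_inner]
    exact hH.gb_sub hx ξ
  · have := hH.gb_le_polar !₂[pd H 0 x, pd H 1 x] hx
    rw [gb_inner] at this
    have h2 := hH.gb_eulerH hx
    simp only [Matrix.cons_val_zero, Matrix.cons_val_one] at this
    rw [h2, div_self (hH.gb_pos hx).ne'] at this
    exact this

end IsAnisoNorm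

lemma gb_kappa {H : E2 → ℝ} (hH : IsAnisoNorm H) :
    2 * kappa H = ∫ t in (-Real.pi)..Real.pi, ((polar H (gbE t)) ^ 2)⁻¹ := by
  have hPc : Continuous fun t => polar H (gbE t) := hH.gb_polar_cont.comp gbE_contDiff.continuous
  have hPpos : ∀ t, 0 < polar H (gbE t) := fun t => hH.gb_polar_pos (gbE_ne t)
  have hWo : IsOpen (Wulff H) := isOpen_lt hH.gb_polar_cont continuous_const
  have hmp := Complex.orthonormalBasisOneI.measurePreserving_repr
  set e := Complex.orthonormalBasisOneI.repr with he
  have hec : Continuous e := e.continuous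
  have hWm : MeasurableSet (e ⁻¹' Wulff H) := (hWo.preimage hec).measurableSet
  have h1 : volume (Wulff H) = ∫⁻ z : ℂ, (e ⁻¹' Wulff H).indicator 1 z := by
    rw [lintegral_indicator_one hWm, hmp.measure_preimage hWo.measurableSet.nullMeasurableSet]
  have hval : ∀ p : ℝ × ℝ, e (Complex.polarCoord.symm p) = p.1 • gbE p.2 := by
    intro p
    have : e (Complex.polarCoord.symm p) = !₂[(Complex.polarCoord.symm p).re,
        (Complex.polarCoord.symm p).im] := by
      rw [he]
      ext i
      fin_cases i <;> simp
    rw [this, Complex.polarCoord_symm_apply]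
    ext i
    fin_cases i <;> simp [Complex.cos_ofReal_re, Complex.sin_ofReal_re]
  have hIntg : ∀ t, ∫⁻ r in Ioi (0 : ℝ), ENNReal.ofReal r *
      (e ⁻¹' Wulff H).indicator 1 (Complex.polarCoord.symm (r, t)) =
      ENNReal.ofReal (((polar H (gbE t)) ^ 2)⁻¹ / 2) := by
    intro t
    have hP := hPpos t
    set c := (polar H (gbE t))⁻¹ with hc
    have hc0 : 0 < c := inv_pos.2 hP
    have e1 : ∀ r ∈ Ioi (0 : ℝ), ENNReal.ofReal r *
        (e ⁻¹' Wulff H).indicator 1 (Complex.polarCoord.symm (r, t)) =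
        (Iio c).indicator (fun r => ENNReal.ofReal r) r := by
      intro r hr
      have hiff : (Complex.polarCoord.symm (r, t) ∈ e ⁻¹' Wulff H) ↔ r ∈ Iio c := by
        rw [mem_preimage, hval, Wulff, mem_ofPred_eq, IsAnisoNorm.gb_polar_smul _ (le_of_lt hr),
          mem_Iio, hc, lt_inv_comm₀ hr hP, ← one_div, lt_div_iff₀' hr]
      by_cases h : r ∈ Iio c
      · rw [indicator_of_mem h, indicator_of_mem (hiff.2 h)]; simp
      · rw [indicator_of_notMem h, indicator_of_notMem (fun h' => h (hiff.1 h'))]; simp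
    rw [setLIntegral_congr_fun measurableSet_Ioi e1, setLIntegral_indicator measurableSet_Iio,
      inter_comm, Ioi_inter_Iio, Measure.restrict_congr_set Ioo_ae_eq_Ioc,
      ← ofReal_integral_eq_lintegral_ofReal, ← intervalIntegral.integral_of_le hc0.le, integral_id]
    · rw [hc]; congr 1; rw [inv_pow]; ring
    · exact (continuous_id.integrableOn_Icc).mono_set Ioc_subset_Icc_self
    · filter_upwards [ae_restrict_mem measurableSet_Ioc] with r hr using hr.1.le
  have h2 : volume (Wulff H) =
      ENNReal.ofReal (∫ t in (-Real.pi)..Real.pi, ((polar H (gbE t)) ^ 2)⁻¹ / 2) := by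
    rw [h1, ← Complex.lintegral_comp_polarCoord_symm, polarCoord_target, Measure.volume_eq_prod,
      ← Measure.prod_restrict, lintegral_prod_symm]
    · simp only [smul_eq_mul]
      simp_rw [hIntg]
      rw [intervalIntegral.integral_of_le (by linarith [Real.pi_pos]),
        Measure.restrict_congr_set Ioo_ae_eq_Ioc, ofReal_integral_eq_lintegral_ofReal]
      · refine Continuous.integrableOn_Ioc ?_
        exact ((hPc.pow 2).inv₀ fun t => (pow_pos (hPpos t) 2).ne').div_const 2
      · exact Filter.Eventually.of_forall fun t => by positivity
    · refine Measurable.aemeasurable ?_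
      refine Measurable.smul (ENNReal.measurable_ofReal.comp measurable_fst) ?_
      refine (measurable_one.indicator hWm).comp ?_
      have : (Complex.polarCoord.symm : ℝ × ℝ → ℂ) =
          fun p => (p.1 : ℂ) * (Real.cos p.2 + Real.sin p.2 * Complex.I) := by
        funext p; exact Complex.polarCoord_symm_apply p
      rw [this]
      have : Continuous fun p : ℝ × ℝ =>
        (p.1 : ℂ) * (Real.cos p.2 + Real.sin p.2 * Complex.I) := by fun_prop
      exact this.measurable
  rw [kappa, h2, ENNReal.toReal_ofReal, intervalIntegral.integral_div]
  · ring
  · refine intervalIntegral.integral_nonneg (by linarith [Real.pi_pos]) fun t _ => by positivity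

lemma gb_norm_sq (a b : ℝ) : ‖(!₂[a, b] : E2)‖ ^ 2 = a ^ 2 + b ^ 2 := by
  rw [EuclideanSpace.real_norm_sq_eq, Fin.sum_univ_two]
  simp

/-- The structure of a symmetric `2 × 2` matrix with a null vector. -/
lemma gb_rank_one {a b h00 h01 h10 h11 : ℝ} (hs : h01 = h10) (e0 : a * h00 + b * h10 = 0)
    (e1 : a * h01 + b * h11 = 0) :
    (a ^ 2 + b ^ 2) * h00 = (h00 + h11) * b ^ 2 ∧ (a ^ 2 + b ^ 2) * h01 = -(h00 + h11) * (a * b) ∧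
      (a ^ 2 + b ^ 2) * h11 = (h00 + h11) * a ^ 2 := by
  subst hs
  refine ⟨?_, ?_, ?_⟩
  · linear_combination a * e0 - b * e1
  · linear_combination a * e1 + b * e0
  · linear_combination b * e1 - a * e0

lemma gb_hasDerivAt_E (t : ℝ) : HasDerivAt gbE !₂[-Real.sin t, Real.cos t] t := by
  have h := ((Real.hasDerivAt_cos t).smul_const (!₂[1, 0] : E2)).add
    ((Real.hasDerivAt_sin t).smul_const (!₂[0, 1] : E2))
  have e1 : gbE = (fun t => Real.cos t • (!₂[1, 0] : E2)) + fun t => Real.sin t • (!₂[0, 1] : E2) := by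
    funext s
    ext i
    fin_cases i <;> simp
  rw [e1]
  refine h.congr_deriv ?_
  ext i
  fin_cases i <;> simp

lemma gb_norm_E (t : ℝ) : ‖gbE t‖ ^ 2 = 1 := by
  rw [gbE, gb_norm_sq]; exact Real.cos_sq_add_sin_sq t

lemma gb_E_pi : gbE Real.pi = gbE (-Real.pi) := by
  simp [gbE]

/-- The Wulff shape side. -/
lemma gb_wulff {H : E2 → ℝ} (hH : IsAnisoNorm H) :
    ∫ t in (-Real.pi)..Real.pi, H (gbE t) * (hessian H (gbE t) 0 0 + hessian H (gbE t) 1 1) =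
      2 * kappa H := by
  rw [gb_kappa hH]
  have hcE : Continuous gbE := gbE_contDiff.continuous
  have hhc : ∀ i j, Continuous fun t => hessian H (gbE t) i j := fun i j =>
    continuousOn_univ.1 ((gb_hessian_cont isOpen_compl_singleton hH.smooth i j).comp
      hcE.continuousOn (fun t _ => gbE_ne t))
  have hd : ∀ j t, HasDerivAt (fun t => pd H j (gbE t))
      (-Real.sin t * hessian H (gbE t) 0 j + Real.cos t * hessian H (gbE t) 1 j) t := by
    intro j t
    have := (hH.gb_pd_diffAt (gbE_ne t) j).hasFDerivAt.comp_hasDerivAt t (gb_hasDerivAt_E t)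
    refine this.congr_deriv ?_
    rw [gb_fderiv_apply]
    rfl
  have key := gb_angle (hd 0) (hd 1)
    ((Real.continuous_sin.neg.mul (hhc 0 0)).add (Real.continuous_cos.mul (hhc 1 0)))
    ((Real.continuous_sin.neg.mul (hhc 0 1)).add (Real.continuous_cos.mul (hhc 1 1)))
    (fun t => by
      have h1 := hH.gb_eulerH (gbE_ne t)
      have h2 := hH.gb_pos (gbE_ne t)
      simp only [gbE_zero, gbE_one] at h1
      linarith) (by rw [gb_E_pi]) (by rw [gb_E_pi])
    (fun x => ‖x‖ ^ 2 / polar H x ^ 2)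
    (ContinuousOn.div (by fun_prop) (hH.gb_polar_cont.pow 2).continuousOn
      fun x hx => (pow_pos (hH.gb_polar_pos hx) 2).ne')
    (fun s hs x => by
      rw [IsAnisoNorm.gb_polar_smul x hs.le, norm_smul, Real.norm_of_nonneg hs.le, mul_pow, mul_pow,
        mul_div_mul_left _ _ (pow_pos hs 2).ne'])
  have e1 : ∀ t, ‖gbE t‖ ^ 2 / polar H (gbE t) ^ 2 = (polar H (gbE t) ^ 2)⁻¹ := by
    intro t
    rw [gb_norm_E, one_div]
  simp only [e1] at key
  rw [← key]
  refine intervalIntegral.integral_congr fun t _ => ?_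
  have hE := hH.gb_eulerH (gbE_ne t)
  simp only [hH.gb_polar_grad (gbE_ne t), gb_norm_sq]
  have hw : pd H 0 (gbE t) ^ 2 + pd H 1 (gbE t) ^ 2 ≠ 0 := by
    intro h
    have h0 : pd H 0 (gbE t) = 0 := by nlinarith [sq_nonneg (pd H 0 (gbE t)), sq_nonneg (pd H 1 (gbE t))]
    have h1 : pd H 1 (gbE t) = 0 := by nlinarith [sq_nonneg (pd H 0 (gbE t)), sq_nonneg (pd H 1 (gbE t))]
    have := hH.gb_pos (gbE_ne t)
    rw [h0, h1] at hE
    linarith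
  obtain ⟨r1, r2, r3⟩ := gb_rank_one
    (gb_hessian_symm (hH.gb_diffAt (gbE_ne t)) 0 1) (hH.gb_null (gbE_ne t) 0)
    (hH.gb_null (gbE_ne t) 1)
  have hsymm := gb_hessian_symm (hH.gb_diffAt (gbE_ne t)) 0 1
  simp only [gbE_zero, gbE_one, Real.cos_sq_add_sin_sq, one_mul] at r1 r2 r3 hE
  have hcs := Real.sin_sq_add_cos_sq t
  set q := hessian H (gbE t) 0 0 + hessian H (gbE t) 1 1 with hq
  rw [← hsymm, r1, r2, r3]
  rw [← hE]
  field_simp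
  linear_combination (-q * (Real.cos t * pd H 0 (gbE t) + pd H 1 (gbE t) * Real.sin t)) * hcs

/-- Pointwise identity for the integrand. -/
lemma gb_pointwise {n0 n1 g0 g1 c m h00 h01 h10 h11 f00 f01 f10 f11 P L : ℝ}
    (hm : 0 < m) (hm2 : m ^ 2 = n0 ^ 2 + n1 ^ 2) (hc : 0 < c)
    (hg0 : g0 = -c * n1) (hg1 : g1 = c * n0) (hL : 0 ≤ L) (hL2 : L ^ 2 = g0 ^ 2 + g1 ^ 2)
    (hs : h01 = h10) (hf : f01 = f10) (e0 : n0 * h00 + n1 * h10 = 0)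
    (e1 : n0 * h01 + n1 * h11 = 0) :
    (h00 * f00 + h01 * f01 + (h10 * f10 + h11 * f11)) * (m⁻¹ * P) * L =
      P * (h00 + h11) * ((n0 * (g0 * f01 + g1 * f11) - n1 * (g0 * f00 + g1 * f10)) /
        (n0 ^ 2 + n1 ^ 2)) := by
  have hLm : L = c * m := by
    have : L ^ 2 = (c * m) ^ 2 := by
      rw [hL2, mul_pow, hm2, hg0, hg1]; ring
    exact (pow_left_inj₀ hL (by positivity) two_ne_zero).1 this
  obtain ⟨r1, r2, r3⟩ := gb_rank_one hs e0 e1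
  subst hs hf
  rw [← hm2] at r1 r2 r3 ⊢
  rw [hLm, hg0, hg1]
  field_simp
  linear_combination P * f00 * r1 + 2 * P * f01 * r2 + P * f11 * r3

/-- anisotropic Gauss–Bonnet: for a convex bounded open set `K ⊂ ℝ²` with
`C²` boundary, `∫_{∂K} k_H(x) H(ν(x)) dℋ¹(x) = 2κ`.  Here the boundary is described by a `C²`
defining function `φ` (so that `ν = ∇φ/|∇φ|` and the curvature `k_H` is computed from
`v = -φ`, which is positive in `K`). -/
theorem aniso_gauss_bonnet
    (H : E2 → ℝ) (hH : IsAnisoNorm H)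
    (K : Set E2) (hKo : IsOpen K) (hKb : Bornology.IsBounded K) (hKc : Convex ℝ K)
    (hKne : K.Nonempty)
    (φ : E2 → ℝ) (hφ : ContDiff ℝ 2 φ) (hKφ : K = {x | φ x < 0})
    (hfr : frontier K = {x | φ x = 0})
    (hgrad : ∀ x ∈ frontier K, gradient φ x ≠ 0) :
    ∫ x in frontier K,
        kH H (fun y => -φ y) x * H (‖gradient φ x‖⁻¹ • gradient φ x)
        ∂(μH[1] : Measure E2)
      = 2 * kappa H := by
  obtain ⟨x0, hx0⟩ := hKne
  have hgr : ∀ x, gradient φ x = !₂[pd φ 0 x, pd φ 1 x] := by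
    intro x
    ext i
    fin_cases i
    · exact gb_gradient_apply φ x 0
    · exact gb_gradient_apply φ x 1
  have hgrad' : ∀ x ∈ frontier K, fderiv ℝ φ x ≠ 0 := by
    intro x hx h
    apply hgrad x hx
    simp [gradient, h]
  obtain ⟨r, hr, hrpos, hrper, hiff, htr⟩ :=
    gb_boundary K hKo hKb hKc φ hφ hKφ hfr hgrad' x0 hx0
  set γ : ℝ → E2 := fun t => x0 + r t • gbE t with hγdef
  set γ' : ℝ → E2 := fun t => r t • !₂[-Real.sin t, Real.cos t] + deriv r t • gbE t with hγ'def
  have hrd : ∀ t, HasDerivAt r (deriv r t) t := fun t =>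
    (hr.differentiable two_ne_zero t).hasDerivAt
  have hrc' : Continuous (deriv r) := hr.continuous_deriv (by norm_num)
  have hγ : ∀ t, HasDerivAt γ (γ' t) t := fun t =>
    ((hrd t).smul (gb_hasDerivAt_E t)).const_add x0
  have hγc : Continuous γ := continuous_iff_continuousAt.2 fun t => (hγ t).continuousAt
  have hcE : Continuous gbE := gbE_contDiff.continuous
  have hE'c : Continuous fun t => (!₂[-Real.sin t, Real.cos t] : E2) := by fun_prop
  have hγ'c : Continuous γ' := (hr.continuous.smul hE'c).add (hrc'.smul hcE)
  have hg0 : ∀ t, γ' t 0 = deriv r t * Real.cos t - r t * Real.sin t := by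
    intro t
    simp [hγ'def]
    ring
  have hg1 : ∀ t, γ' t 1 = deriv r t * Real.sin t + r t * Real.cos t := by
    intro t
    simp [hγ'def]
    ring
  have hmem : ∀ t, γ t ∈ frontier K := fun t => (hiff t _ (hrpos t).le).2 rfl
  have hφU : ContDiffOn ℝ 2 φ univ := hφ.contDiffOn
  have hφhc : ∀ i j, Continuous fun x => hessian φ x i j := fun i j =>
    continuousOn_univ.1 (gb_hessian_cont isOpen_univ hφU i j)
  have hpdd : ∀ j x, DifferentiableAt ℝ (pd φ j) x := fun j x =>
    ((gb_pd_contDiff isOpen_univ hφU j).contDiffAt Filter.univ_mem).differentiableAt one_ne_zero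
  have hnd : ∀ j t, HasDerivAt (fun t => pd φ j (γ t))
      (γ' t 0 * hessian φ (γ t) 0 j + γ' t 1 * hessian φ (γ t) 1 j) t := by
    intro j t
    have := (hpdd j (γ t)).hasFDerivAt.comp_hasDerivAt t (hγ t)
    refine this.congr_deriv ?_
    rw [gb_fderiv_apply]
    rfl
  have hn0 : ∀ x ∈ frontier K, (!₂[pd φ 0 x, pd φ 1 x] : E2) ≠ 0 := fun x hx => by
    rw [← hgr]; exact hgrad x hx
  have htan : ∀ t, γ' t 0 * pd φ 0 (γ t) + γ' t 1 * pd φ 1 (γ t) = 0 := by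
    intro t
    rw [← gb_fderiv_apply]
    have h1 := (hφ.differentiable two_ne_zero (γ t)).hasFDerivAt.comp_hasDerivAt t (hγ t)
    have h2 : φ ∘ γ = fun _ => 0 := by
      funext s
      have := hmem s
      rw [hfr] at this
      exact this
    rw [h2] at h1
    exact h1.unique (hasDerivAt_const t 0)
  have hpos : ∀ t, 0 < pd φ 0 (γ t) * Real.cos t + pd φ 1 (γ t) * Real.sin t := by
    intro t
    have := htr t
    rw [gb_fderiv_apply] at this
    simp only [gbE_zero, gbE_one] at this
    linarith
  have hker : ∀ x ∈ frontier K,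
      kH H (fun y => -φ y) x * H (‖gradient φ x‖⁻¹ • gradient φ x) =
      (hessian H !₂[pd φ 0 x, pd φ 1 x] 0 0 * hessian φ x 0 0 +
        hessian H !₂[pd φ 0 x, pd φ 1 x] 0 1 * hessian φ x 0 1 +
        (hessian H !₂[pd φ 0 x, pd φ 1 x] 1 0 * hessian φ x 1 0 +
        hessian H !₂[pd φ 0 x, pd φ 1 x] 1 1 * hessian φ x 1 1)) *
        (‖(!₂[pd φ 0 x, pd φ 1 x] : E2)‖⁻¹ * H !₂[pd φ 0 x, pd φ 1 x]) := by
    intro x _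
    have hgn : gradient (fun y => -φ y) x = (-1 : ℝ) • !₂[pd φ 0 x, pd φ 1 x] := by
      ext i
      rw [gb_gradient_apply, gb_pd_neg]
      fin_cases i <;> simp
    rw [hH.homog, abs_of_nonneg (by positivity), hgr, kH, hgn]
    simp only [Fin.sum_univ_two, gb_hessian_neg,
      hH.gb_hess_smul (by norm_num : (-1 : ℝ) ≠ 0), abs_neg, abs_one, inv_one, one_mul]
    ring
  have hnvc : Continuous fun t => (!₂[pd φ 0 (γ t), pd φ 1 (γ t)] : E2) := by
    have h0 : ∀ j, Continuous fun t => pd φ j (γ t) := fun j =>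
      continuous_iff_continuousAt.2 fun t => (hnd j t).continuousAt
    have := h0 0
    have := h0 1
    fun_prop
  have hHhc : ∀ i j, Continuous fun t => hessian H !₂[pd φ 0 (γ t), pd φ 1 (γ t)] i j := fun i j =>
    continuousOn_univ.1 ((gb_hessian_cont isOpen_compl_singleton hH.smooth i j).comp
      hnvc.continuousOn (fun t _ => hn0 _ (hmem t)))
  have hHc : Continuous fun t => H !₂[pd φ 0 (γ t), pd φ 1 (γ t)] :=
    continuousOn_univ.1 (hH.smooth.continuousOn.comp
      hnvc.continuousOn (fun t _ => hn0 _ (hmem t)))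
  have hcont : Continuous fun t => kH H (fun y => -φ y) (γ t) *
      H (‖gradient φ (γ t)‖⁻¹ • gradient φ (γ t)) := by
    simp_rw [fun t => hker (γ t) (hmem t)]
    have hi : Continuous fun t => ‖(!₂[pd φ 0 (γ t), pd φ 1 (γ t)] : E2)‖⁻¹ :=
      hnvc.norm.inv₀ fun t => norm_ne_zero_iff.2 (hn0 _ (hmem t))
    have hf : ∀ i j, Continuous fun t => hessian φ (γ t) i j := fun i j => (hφhc i j).comp hγc
    exact ((((hHhc 0 0).mul (hf 0 0)).add ((hHhc 0 1).mul (hf 0 1))).add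
      (((hHhc 1 0).mul (hf 1 0)).add ((hHhc 1 1).mul (hf 1 1)))).mul (hi.mul hHc)
  have hangm : Measurable fun x : E2 => gbArg (x - x0) :=
    gbArg_meas.comp (measurable_id.sub_const x0)
  rw [gb_curve_integral (a := -Real.pi) (b := Real.pi) hγ hγ'c isClosed_frontier.measurableSet hangm
    (fun x hx => ⟨gbArg_mem _, by
      have h1 : x0 + ‖x - x0‖ • gbE (gbArg (x - x0)) = x := by rw [gb_norm_arg]; abel
      have h2 := (hiff (gbArg (x - x0)) ‖x - x0‖ (norm_nonneg _)).1 (by rw [h1]; exact hx)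
      show x0 + r (gbArg (x - x0)) • gbE (gbArg (x - x0)) = x
      rw [← h2]
      exact h1⟩)
    (fun t ht => ⟨hmem t, by
      simp only [hγdef, add_sub_cancel_left]
      exact gbArg_smul (hrpos t) ht⟩)
    (by linarith [Real.pi_pos]) _ hcont, ← gb_wulff hH]
  have hγ0c : Continuous fun t => γ' t 0 := by fun_prop
  have hγ1c : Continuous fun t => γ' t 1 := by fun_prop
  have hγpi : γ Real.pi = γ (-Real.pi) := by
    have h1 := hrper (-Real.pi)
    have h2 : -Real.pi + 2 * Real.pi = Real.pi := by ring
    rw [h2] at h1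
    simp only [hγdef, h1, gb_E_pi]
  have hFsm : ContinuousOn (fun x => H x * (hessian H x 0 0 + hessian H x 1 1)) {0}ᶜ :=
    hH.smooth.continuousOn.mul
      ((gb_hessian_cont isOpen_compl_singleton hH.smooth 0 0).add
        (gb_hessian_cont isOpen_compl_singleton hH.smooth 1 1))
  rw [← gb_angle (hnd 0) (hnd 1)
    ((hγ0c.mul ((hφhc 0 0).comp hγc)).add (hγ1c.mul ((hφhc 1 0).comp hγc)))
    ((hγ0c.mul ((hφhc 0 1).comp hγc)).add (hγ1c.mul ((hφhc 1 1).comp hγc)))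
    hpos (by rw [hγpi]) (by rw [hγpi])
    (fun x => H x * (hessian H x 0 0 + hessian H x 1 1)) hFsm
    (fun s hs x => by
      rw [hH.homog, hH.gb_hess_smul hs.ne', hH.gb_hess_smul hs.ne', abs_of_pos hs]
      field_simp)]
  refine intervalIntegral.integral_congr fun t _ => ?_
  have hn := hn0 _ (hmem t)
  have hAp := hpos t
  have ht0 := htan t
  simp only []
  rw [hker _ (hmem t)]
  have hcs := Real.sin_sq_add_cos_sq t
  refine gb_pointwise (c := r t / (pd φ 0 (γ t) * Real.cos t + pd φ 1 (γ t) * Real.sin t))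
    (norm_pos_iff.2 hn) (gb_norm_sq _ _) (div_pos (hrpos t) hAp) ?_ ?_ (norm_nonneg _)
    ?_ (gb_hessian_symm (hH.gb_diffAt hn) 0 1) (gb_hessian_symm hφ.contDiffAt 0 1)
    (hH.gb_null hn 0) (hH.gb_null hn 1)
  · rw [hg0, hg1] at ht0
    rw [hg0]
    rw [neg_mul, div_mul_eq_mul_div, ← neg_div, eq_div_iff hAp.ne']
    linear_combination Real.cos t * ht0 - r t * pd φ 1 (γ t) * hcs
  · rw [hg0, hg1] at ht0
    rw [hg1]
    rw [div_mul_eq_mul_div, eq_div_iff hAp.ne']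
    linear_combination Real.sin t * ht0 + r t * pd φ 0 (γ t) * hcs
  · rw [EuclideanSpace.real_norm_sq_eq, Fin.sum_univ_two]
end
end

section
/- Let Ω ⊂ ℝ² be a bounded convex open set with C² boundary and let u ∈ Φ₀(Ω) ∩ C²(E_u). Then the rearrangement u^♦ of u with respect to the anisotropic perimeter belongs to C^{0,1}((0, P_H(Ω)]), and there exists a positive constant C > 0 such that 0 ≤ -(u^♦)'(s) ≤ C for every s ∈ (0, P_H(Ω)]; in fact one may take C = β · max_{Ω̄}|∇u| / (2κ), where β is any constant with H(ξ) ≤ β|ξ| for all ξ. -/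
open MeasureTheory Set
open scoped ENNReal NNReal RealInnerProductSpace

noncomputable section

/-- unit vector at angle θ -/
def ev (θ : ℝ) : E2 := !₂[Real.cos θ, Real.sin θ]
/-- rotated unit vector -/
def evp (θ : ℝ) : E2 := !₂[-Real.sin θ, Real.cos θ]
/-- `H` as a function of the angle. -/
def hh (H : E2 → ℝ) (θ : ℝ) : ℝ := H (ev θ)
/-- `h + h''`. -/
def ff (H : E2 → ℝ) (θ : ℝ) : ℝ := hh H θ + deriv (deriv (hh H)) θ

lemma inner_E2 (x y : E2) : ⟪x, y⟫ = x 0 * y 0 + x 1 * y 1 := by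
  simp [PiLp.inner_apply, Fin.sum_univ_two, mul_comm]

lemma norm_sq_E2 (x : E2) : ‖x‖ ^ 2 = x 0 ^ 2 + x 1 ^ 2 := by
  rw [EuclideanSpace.norm_sq_eq]; simp [Fin.sum_univ_two]

lemma ev_zero (θ : ℝ) : ev θ 0 = Real.cos θ := by simp [ev]
lemma ev_one (θ : ℝ) : ev θ 1 = Real.sin θ := by simp [ev]
lemma evp_zero (θ : ℝ) : evp θ 0 = -Real.sin θ := by simp [evp]
lemma evp_one (θ : ℝ) : evp θ 1 = Real.cos θ := by simp [evp]

lemma norm_ev (θ : ℝ) : ‖ev θ‖ = 1 := by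
  have := norm_sq_E2 (ev θ)
  rw [ev_zero, ev_one, Real.cos_sq_add_sin_sq] at this
  nlinarith [norm_nonneg (ev θ)]

lemma norm_evp (θ : ℝ) : ‖evp θ‖ = 1 := by
  have := norm_sq_E2 (evp θ)
  rw [evp_zero, evp_one, neg_sq, Real.sin_sq_add_cos_sq] at this
  nlinarith [norm_nonneg (evp θ)]

lemma ev_ne (θ : ℝ) : ev θ ≠ 0 := by
  intro h; have := norm_ev θ; rw [h] at this; simp at this

lemma exists_ev (x : E2) : ∃ φ, x = ‖x‖ • ev φ := by
  let z : ℂ := ⟨x 0, x 1⟩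
  have hz : ‖z‖ = ‖x‖ := by
    have h1 : ‖z‖ ^ 2 = ‖x‖ ^ 2 := by
      rw [norm_sq_E2, Complex.sq_norm, Complex.normSq_apply]; simp [z]; ring
    exact (pow_left_inj₀ (norm_nonneg _) (norm_nonneg _) two_ne_zero).1 h1
  refine ⟨z.arg, ?_⟩
  ext i
  fin_cases i
  · have := Complex.norm_mul_cos_arg z
    simp [ev_zero, ← hz, this, z]
  · have := Complex.norm_mul_sin_arg z
    simp [ev_one, ← hz, this, z]

lemma contDiff_ev {n : WithTop ℕ∞} : ContDiff ℝ n ev := by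
  rw [contDiff_euclidean]
  intro i
  fin_cases i
  · simpa [ev] using Real.contDiff_cos
  · simpa [ev] using Real.contDiff_sin

lemma ev_add_pi (θ : ℝ) : ev (θ + Real.pi) = (-1 : ℝ) • ev θ := by
  ext i; fin_cases i <;> simp [ev]

section partA
variable {H : E2 → ℝ}

lemma hh_contDiff (hH : IsAnisoNorm H) : ContDiff ℝ 2 (hh H) := by
  have := hH.smooth.comp (s := univ) (contDiff_ev (n := 2)).contDiffOn (fun θ _ => ev_ne θ)
  exact contDiffOn_univ.1 this

lemma hh_pi (hH : IsAnisoNorm H) (θ : ℝ) : hh H (θ + Real.pi) = hh H θ := by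
  simp only [hh, ev_add_pi, hH.homog]; simp

lemma hh_hasDerivAt (hH : IsAnisoNorm H) (θ : ℝ) : HasDerivAt (hh H) (deriv (hh H) θ) θ :=
  ((hh_contDiff hH).differentiable (by norm_num) θ).hasDerivAt

lemma dhh_contDiff (hH : IsAnisoNorm H) : ContDiff ℝ 1 (deriv (hh H)) := by
  have := hh_contDiff hH
  rw [show (2 : WithTop ℕ∞) = 1 + 1 by norm_num, contDiff_succ_iff_deriv] at this
  exact this.2.2

lemma dhh_hasDerivAt (hH : IsAnisoNorm H) (θ : ℝ) :
    HasDerivAt (deriv (hh H)) (deriv (deriv (hh H)) θ) θ :=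
  ((dhh_contDiff hH).differentiable (by norm_num) θ).hasDerivAt

lemma hh_cont (hH : IsAnisoNorm H) : Continuous (hh H) := (hh_contDiff hH).continuous

lemma ff_cont (hH : IsAnisoNorm H) : Continuous (ff H) :=
  (hh_cont hH).add ((dhh_contDiff hH).continuous_deriv (by norm_num))

lemma hh_two_pi (hH : IsAnisoNorm H) : Function.Periodic (hh H) (2 * Real.pi) := by
  intro θ
  rw [two_mul, ← add_assoc, hh_pi hH, hh_pi hH]

lemma deriv_periodic {g : ℝ → ℝ} {c : ℝ} (hg : Function.Periodic g c) :
    Function.Periodic (deriv g) c := by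
  intro θ
  rw [← deriv_comp_add_const, show (fun x => g (x + c)) = g from funext hg]

lemma ff_pi (hH : IsAnisoNorm H) : Function.Periodic (ff H) Real.pi := by
  have h1 : Function.Periodic (hh H) Real.pi := hh_pi hH
  exact h1.add (deriv_periodic (deriv_periodic h1))

lemma hh_pos (hH : IsAnisoNorm H) (θ : ℝ) : 0 < hh H θ := by
  obtain ⟨α, hα, h⟩ := hH.coercive
  have := h (ev θ)
  rw [norm_ev] at this
  unfold hh; linarith

lemma H_add (hH : IsAnisoNorm H) (x y : E2) : H (x + y) ≤ H x + H y := by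
  have := hH.convex.2 (mem_univ x) (mem_univ y) (show (0 : ℝ) ≤ 1/2 by norm_num)
    (show (0 : ℝ) ≤ 1/2 by norm_num) (by norm_num)
  rw [← smul_add, hH.homog] at this
  simp only [smul_eq_mul] at this
  rw [abs_of_pos (by norm_num)] at this
  linarith

lemma ff_nonneg (hH : IsAnisoNorm H) (θ : ℝ) : 0 ≤ ff H θ := by
  by_contra! hneg
  let g : ℝ → ℝ := fun δ => hh H (θ + δ) + hh H (θ - δ) - 2 * Real.cos δ * hh H θ
  have hg0 : g 0 = 0 := by simp [g]; ring
  have hg' : ∀ δ, HasDerivAt g (deriv (hh H) (θ + δ) - deriv (hh H) (θ - δ)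
      + 2 * Real.sin δ * hh H θ) δ := by
    intro δ
    have h1 := (hh_hasDerivAt hH (θ + δ)).comp_const_add θ δ
    have h2 := (hh_hasDerivAt hH (θ - δ)).comp_const_sub θ δ
    have h3 := ((Real.hasDerivAt_cos δ).const_mul 2).mul_const (hh H θ)
    convert! (h1.add h2).sub h3 using 1
    ring
  have hdg : deriv g = fun δ => deriv (hh H) (θ + δ) - deriv (hh H) (θ - δ)
      + 2 * Real.sin δ * hh H θ := funext fun δ => (hg' δ).deriv
  have hg'' : deriv (deriv g) 0 = 2 * ff H θ := by
    rw [hdg]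
    have h1 := (dhh_hasDerivAt hH (θ + 0)).comp_const_add θ 0
    have h2 := (dhh_hasDerivAt hH (θ - 0)).comp_const_sub θ 0
    have h3 := ((Real.hasDerivAt_sin 0).const_mul 2).mul_const (hh H θ)
    have := ((h1.sub h2).add h3).deriv
    simp only [add_zero, sub_zero, Real.cos_zero] at this
    unfold ff
    refine Eq.trans this ?_
    ring
  have hnn : ∀ δ, 0 ≤ g δ := by
    intro δ
    have h1 := H_add hH (ev (θ + δ)) (ev (θ - δ))
    have h2 : ev (θ + δ) + ev (θ - δ) = (2 * Real.cos δ) • ev θ := by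
      ext i; fin_cases i
      · simp [ev, Real.cos_add, Real.cos_sub]; ring
      · simp [ev, Real.sin_add, Real.sin_sub]; ring
    rw [h2, hH.homog] at h1
    have h3 := mul_le_mul_of_nonneg_right (le_abs_self (2 * Real.cos δ)) (hH.nonneg (ev θ))
    simp only [g, hh]
    linarith
  have hmax : IsLocalMax g 0 := by
    refine isLocalMax_of_deriv_deriv_neg (by rw [hg'']; linarith) ?_ (hg' 0).continuousAt
    rw [hdg]; simp
  have hz : g =ᶠ[nhds 0] fun _ => 0 := by
    filter_upwards [hmax] with δ hδ
    exact le_antisymm (by rw [hg0] at hδ; exact hδ) (hnn δ)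
  have h0 : deriv (deriv g) 0 = 0 := by
    have := hz.deriv.deriv_eq
    rw [this]; simp
  rw [hg''] at h0
  linarith

/-- zonoid representation of the norm -/
lemma H_repr (hH : IsAnisoNorm H) (x : E2) :
    H x = (1/4) * ∫ ψ in (0 : ℝ)..(2 * Real.pi), |⟪x, evp ψ⟫| * ff H ψ := by
  obtain ⟨φ, hφ⟩ := exists_ev x
  have hin : ∀ ψ, |⟪x, evp ψ⟫| = ‖x‖ * |Real.sin (ψ - φ)| := by
    intro ψ
    conv_lhs => rw [hφ, inner_smul_left]
    rw [inner_E2, ev_zero, ev_one, evp_zero, evp_one, abs_mul]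
    simp only [conj_trivial, abs_norm, Real.sin_sub]
    rw [← abs_neg (Real.sin ψ * _ - _)]
    congr 2; ring
  have hHx : H x = ‖x‖ * hh H φ := by
    conv_lhs => rw [hφ, hH.homog]
    simp [hh]
  simp only [hin, mul_assoc]
  rw [intervalIntegral.integral_const_mul, hHx]
  have key : ∫ ψ in (0 : ℝ)..(2 * Real.pi), |Real.sin (ψ - φ)| * ff H ψ = 4 * hh H φ := by
    let k : ℝ → ℝ := fun ψ => |Real.sin (ψ - φ)| * ff H ψ
    have hk : Function.Periodic k Real.pi := by
      intro ψ
      simp only [k]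
      rw [ff_pi hH, show ψ + Real.pi - φ = (ψ - φ) + Real.pi by ring, Real.sin_add_pi, abs_neg]
    have hkc : Continuous k := by
      have := ff_cont hH
      fun_prop
    have e1 : ∫ ψ in (0 : ℝ)..(2 * Real.pi), k ψ = 2 * ∫ ψ in φ..(φ + Real.pi), k ψ := by
      rw [← intervalIntegral.integral_add_adjacent_intervals (b := Real.pi)
        (hkc.intervalIntegrable _ _) (hkc.intervalIntegrable _ _)]
      have a := hk.intervalIntegral_add_eq 0 φ
      have b := hk.intervalIntegral_add_eq Real.pi φ
      rw [zero_add] at a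
      rw [← two_mul] at b
      rw [a, b]; ring
    change ∫ ψ in (0 : ℝ)..(2 * Real.pi), k ψ = _
    rw [e1]
    have e2 : ∫ ψ in φ..(φ + Real.pi), k ψ
        = ∫ ψ in φ..(φ + Real.pi), Real.sin (ψ - φ) * ff H ψ := by
      apply intervalIntegral.integral_congr
      intro ψ hψ
      rw [uIcc_of_le (by linarith [Real.pi_pos])] at hψ
      simp only [k]
      rw [abs_of_nonneg (Real.sin_nonneg_of_nonneg_of_le_pi (by linarith [hψ.1])
        (by linarith [hψ.2]))]
    have e3 : ∫ ψ in φ..(φ + Real.pi), Real.sin (ψ - φ) * ff H ψ = 2 * hh H φ := by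
      have hd : ∀ ψ ∈ uIcc φ (φ + Real.pi), HasDerivAt
          (fun ψ => Real.sin (ψ - φ) * deriv (hh H) ψ - Real.cos (ψ - φ) * hh H ψ)
          (Real.sin (ψ - φ) * ff H ψ) ψ := by
        intro ψ _
        have s1 := (Real.hasDerivAt_sin (ψ - φ)).comp_sub_const ψ φ
        have s2 := (Real.hasDerivAt_cos (ψ - φ)).comp_sub_const ψ φ
        convert! (s1.mul (dhh_hasDerivAt hH ψ)).sub (s2.mul (hh_hasDerivAt hH ψ)) using 1
        unfold ff; ring
      rw [intervalIntegral.integral_eq_sub_of_hasDerivAt hd]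
      · simp [hh_pi hH]; ring
      · apply Continuous.intervalIntegrable
        have := ff_cont hH
        fun_prop
    rw [e2, e3]; ring
  rw [key]; ring

end partA


section partB
variable {H : E2 → ℝ}

lemma polar_bdd (hH : IsAnisoNorm H) {α : ℝ} (hα : 0 < α) (h : ∀ ξ, α * ‖ξ‖ ≤ H ξ) (v : E2)
    (ξ : {ξ : E2 // ξ ≠ 0}) : ⟪(ξ : E2), v⟫ / H ξ ≤ ‖v‖ / α := by
  have hξ : 0 < ‖(ξ : E2)‖ := norm_pos_iff.2 ξ.2
  have hp : 0 < H ξ := lt_of_lt_of_le (by positivity) (h ξ)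
  rw [div_le_div_iff₀ hp hα]
  calc ⟪(ξ : E2), v⟫ * α ≤ (‖(ξ : E2)‖ * ‖v‖) * α := by
        gcongr; exact real_inner_le_norm _ _
    _ = ‖v‖ * (α * ‖(ξ : E2)‖) := by ring
    _ ≤ ‖v‖ * H ξ := by gcongr; exact h _

lemma E2_nonempty_ne : Nonempty {ξ : E2 // ξ ≠ 0} := ⟨⟨ev 0, ev_ne 0⟩⟩

lemma kappa_vol_pos (hH : IsAnisoNorm H) : 0 < volume (Wulff H) := by
  obtain ⟨α, hα, h⟩ := hH.coercive
  refine lt_of_lt_of_le (Metric.measure_ball_pos volume (0 : E2) hα) (measure_mono ?_)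
  intro v hv
  rw [mem_ball_zero_iff] at hv
  have := E2_nonempty_ne
  have : polar H v ≤ ‖v‖ / α := ciSup_le (polar_bdd hH hα h v)
  exact lt_of_le_of_lt this ((div_lt_one hα).2 hv)

/-- support point -/
def pp0 (H : E2 → ℝ) (θ : ℝ) : ℝ := hh H θ * Real.cos θ - deriv (hh H) θ * Real.sin θ
def pp1 (H : E2 → ℝ) (θ : ℝ) : ℝ := hh H θ * Real.sin θ + deriv (hh H) θ * Real.cos θ

lemma pp0_deriv (hH : IsAnisoNorm H) (θ : ℝ) :
    HasDerivAt (pp0 H) (-(ff H θ * Real.sin θ)) θ := by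
  convert! ((hh_hasDerivAt hH θ).mul (Real.hasDerivAt_cos θ)).sub
    ((dhh_hasDerivAt hH θ).mul (Real.hasDerivAt_sin θ)) using 1
  unfold ff; ring

lemma pp1_deriv (hH : IsAnisoNorm H) (θ : ℝ) :
    HasDerivAt (pp1 H) (ff H θ * Real.cos θ) θ := by
  convert! ((hh_hasDerivAt hH θ).mul (Real.hasDerivAt_sin θ)).add
    ((dhh_hasDerivAt hH θ).mul (Real.hasDerivAt_cos θ)) using 1
  unfold ff; ring

/-- the parametrization of the Wulff shape -/
def GG (H : E2 → ℝ) (q : ℝ × ℝ) : ℝ × ℝ := (q.1 * pp0 H q.2, q.1 * pp1 H q.2)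

def GG' (H : E2 → ℝ) (q : ℝ × ℝ) : ℝ × ℝ →L[ℝ] ℝ × ℝ :=
  (Matrix.toLin (.finTwoProd ℝ) (.finTwoProd ℝ)
    !![pp0 H q.2, q.1 * (-(ff H q.2 * Real.sin q.2));
      pp1 H q.2, q.1 * (ff H q.2 * Real.cos q.2)]).toContinuousLinearMap

lemma GG_deriv (hH : IsAnisoNorm H) (q : ℝ × ℝ) : HasFDerivAt (GG H) (GG' H q) q := by
  unfold GG'
  rw [Matrix.toLin_finTwoProd_toContinuousLinearMap]
  convert!
    HasFDerivAt.prodMk (𝕜 := ℝ)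
      (hasFDerivAt_fst.mul ((pp0_deriv hH q.2).comp_hasFDerivAt q hasFDerivAt_snd))
      (hasFDerivAt_fst.mul ((pp1_deriv hH q.2).comp_hasFDerivAt q hasFDerivAt_snd)) using
    2 <;>
  simp [smul_smul, add_comm, neg_smul _ (ContinuousLinearMap.snd ℝ ℝ ℝ)]

lemma GG_det (q : ℝ × ℝ) : (GG' H q).det = q.1 * (ff H q.2 * hh H q.2) := by
  unfold GG'
  simp only [LinearMap.det_toContinuousLinearMap, LinearMap.det_toLin, Matrix.det_fin_two_of]
  unfold pp0 pp1
  linear_combination q.1 * ff H q.2 * hh H q.2 * (Real.sin_sq_add_cos_sq q.2)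

lemma wulff_cover (hH : IsAnisoNorm H) (x : E2) (hx : x ∈ Wulff H) :
    (x 0, x 1) ∈ GG H '' (Icc 0 1 ×ˢ Icc 0 (2 * Real.pi)) := by
  obtain ⟨α, hα, h⟩ := hH.coercive
  have hc : Continuous (fun θ => ⟪ev θ, x⟫ / hh H θ) := by
    refine Continuous.div ?_ (hh_cont hH) (fun θ => (hh_pos hH θ).ne')
    exact (contDiff_ev (n := 0)).continuous.inner continuous_const
  obtain ⟨θ, hθ, hmax⟩ := isCompact_Icc.exists_isMaxOn
    (nonempty_Icc.2 (by positivity : (0 : ℝ) ≤ 2 * Real.pi)) hc.continuousOn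
  have hev : Function.Periodic ev (2 * Real.pi) := by
    intro t; ext i; fin_cases i <;> simp [ev]
  have hall : ∀ t, ⟪ev t, x⟫ / hh H t ≤ ⟪ev θ, x⟫ / hh H θ := by
    intro t
    have hper : Function.Periodic (fun θ => ⟪ev θ, x⟫ / hh H θ) (2 * Real.pi) := by
      intro t; simp only [hev t, hh_two_pi hH t]
    obtain ⟨t', ht', he⟩ := hper.exists_mem_Ico₀ (by positivity) t
    rw [he]
    exact hmax ⟨ht'.1, ht'.2.le⟩
  set s := ⟪ev θ, x⟫ / hh H θ with hs
  have hs0 : 0 ≤ s := by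
    have h1 := hall θ
    have h2 := hall (θ + Real.pi)
    rw [hh_pi hH, ev_add_pi, inner_smul_left] at h2
    simp only [map_neg, map_one, neg_mul, one_mul, neg_div] at h2
    rw [← hs] at h2
    linarith
  have hs1 : s ≤ 1 := by
    have : s ≤ polar H x := by
      refine le_ciSup (f := fun ξ : {ξ : E2 // ξ ≠ 0} => ⟪(ξ : E2), x⟫ / H ξ) ?_ ⟨ev θ, ev_ne θ⟩
      exact ⟨‖x‖ / α, by rintro _ ⟨ξ, rfl⟩; exact polar_bdd hH hα h x ξ⟩
    exact this.trans (le_of_lt hx)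
  have hE : x 0 * Real.cos θ + x 1 * Real.sin θ = s * hh H θ := by
    rw [hs, div_mul_cancel₀ _ (hh_pos hH θ).ne', inner_E2, ev_zero, ev_one]; ring
  have hle : ∀ t, x 0 * Real.cos t + x 1 * Real.sin t - s * hh H t ≤ 0 := by
    intro t
    have := hall t
    rw [div_le_iff₀ (hh_pos hH t), inner_E2, ev_zero, ev_one] at this
    linarith
  have hd : HasDerivAt (fun t => x 0 * Real.cos t + x 1 * Real.sin t - s * hh H t)
      (x 0 * (-Real.sin θ) + x 1 * Real.cos θ - s * deriv (hh H) θ) θ :=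
    (((Real.hasDerivAt_cos θ).const_mul _).add ((Real.hasDerivAt_sin θ).const_mul _)).sub
      ((hh_hasDerivAt hH θ).const_mul s)
  have hlm : IsLocalMax (fun t => x 0 * Real.cos t + x 1 * Real.sin t - s * hh H t) θ := by
    refine Filter.Eventually.of_forall fun t => ?_
    simp only
    rw [hE]; linarith [hle t]
  have hD := hlm.hasDerivAt_eq_zero hd
  refine ⟨(s, θ), ⟨⟨hs0, hs1⟩, hθ⟩, ?_⟩
  simp only [GG, pp0, pp1, Prod.mk.injEq]
  have hsc := Real.sin_sq_add_cos_sq θ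
  constructor
  · linear_combination (-Real.cos θ) * hE + Real.sin θ * hD + x 0 * hsc
  · linear_combination (-Real.sin θ) * hE - Real.cos θ * hD + x 1 * hsc

lemma kappa_vol_le (hH : IsAnisoNorm H) :
    volume (Wulff H) ≤ ENNReal.ofReal (1/2 * ∫ θ in (0:ℝ)..(2 * Real.pi), ff H θ * hh H θ) := by
  let T : E2 → ℝ × ℝ := fun x => (x 0, x 1)
  have hT : MeasurePreserving T volume volume := by
    exact (volume_preserving_finTwoArrow ℝ).comp (PiLp.volume_preserving_ofLp (Fin 2))
  let S : Set (ℝ × ℝ) := Icc 0 1 ×ˢ Icc 0 (2 * Real.pi)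
  have hSm : MeasurableSet S := measurableSet_Icc.prod measurableSet_Icc
  have hcpt : IsCompact S := isCompact_Icc.prod isCompact_Icc
  have hGc : Continuous (GG H) :=
    continuous_iff_continuousAt.2 fun q => (GG_deriv hH q).continuousAt
  have h1 : volume (Wulff H) ≤ volume (GG H '' S) := by
    have hm : MeasurableSet (GG H '' S) := (hcpt.image hGc).measurableSet
    rw [← hT.measure_preimage hm.nullMeasurableSet]
    exact measure_mono fun x hx => wulff_cover hH x hx
  refine h1.trans ?_
  refine (addHaar_image_le_lintegral_abs_det_fderiv volume hSm
    (fun q _ => (GG_deriv hH q).hasFDerivWithinAt)).trans ?_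
  have hFc : Continuous (fun θ => ff H θ * hh H θ) := (ff_cont hH).mul (hh_cont hH)
  have e1 : ∫⁻ q in S, ENNReal.ofReal |(GG' H q).det|
      = ∫⁻ q in S, ENNReal.ofReal q.1 * ENNReal.ofReal (ff H q.2 * hh H q.2) := by
    refine setLIntegral_congr_fun hSm ?_
    intro q hq
    simp only
    have hq0 : 0 ≤ q.1 := hq.1.1
    rw [GG_det, abs_of_nonneg (mul_nonneg hq0 (mul_nonneg (ff_nonneg hH _) (hh_pos hH _).le)),
      ENNReal.ofReal_mul hq0]
  rw [e1]
  rw [Measure.volume_eq_prod, ← Measure.prod_restrict]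
  rw [lintegral_prod_mul (f := fun s => ENNReal.ofReal s)
    (g := fun θ => ENNReal.ofReal (ff H θ * hh H θ)) (by fun_prop)
    (hFc.measurable.ennreal_ofReal.aemeasurable)]
  have e2 : ∫⁻ s in Icc (0:ℝ) 1, ENNReal.ofReal s = ENNReal.ofReal (1/2) := by
    rw [← ofReal_integral_eq_lintegral_ofReal]
    · rw [integral_Icc_eq_integral_Ioc, ← intervalIntegral.integral_of_le zero_le_one]
      simp
    · exact continuous_id.integrableOn_Icc
    · exact (ae_restrict_mem measurableSet_Icc).mono fun s hs => hs.1
  have e3 : ∫⁻ θ in Icc (0:ℝ) (2 * Real.pi), ENNReal.ofReal (ff H θ * hh H θ)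
      = ENNReal.ofReal (∫ θ in (0:ℝ)..(2 * Real.pi), ff H θ * hh H θ) := by
    rw [← ofReal_integral_eq_lintegral_ofReal]
    · rw [integral_Icc_eq_integral_Ioc, ← intervalIntegral.integral_of_le (by positivity)]
    · exact hFc.integrableOn_Icc
    · exact Filter.Eventually.of_forall fun θ => mul_nonneg (ff_nonneg hH _) (hh_pos hH _).le
  rw [e2, e3, ← ENNReal.ofReal_mul (by norm_num)]

lemma kappa_pos (hH : IsAnisoNorm H) : 0 < kappa H :=
  ENNReal.toReal_pos (kappa_vol_pos hH).ne'
    (ne_top_of_le_ne_top ENNReal.ofReal_ne_top (kappa_vol_le hH))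

lemma two_kappa_le (hH : IsAnisoNorm H) {β : ℝ} (hβ : ∀ ξ, H ξ ≤ β * ‖ξ‖) :
    2 * kappa H ≤ β * ∫ θ in (0:ℝ)..(2 * Real.pi), ff H θ := by
  have hFc : Continuous (fun θ => ff H θ * hh H θ) := (ff_cont hH).mul (hh_cont hH)
  have h0 : 0 ≤ ∫ θ in (0:ℝ)..(2 * Real.pi), ff H θ * hh H θ :=
    intervalIntegral.integral_nonneg (by positivity)
      fun θ _ => mul_nonneg (ff_nonneg hH _) (hh_pos hH _).le
  have h1 : kappa H ≤ 1/2 * ∫ θ in (0:ℝ)..(2 * Real.pi), ff H θ * hh H θ :=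
    ENNReal.toReal_le_of_le_ofReal (by positivity) (kappa_vol_le hH)
  have h2 : ∫ θ in (0:ℝ)..(2 * Real.pi), ff H θ * hh H θ
      ≤ ∫ θ in (0:ℝ)..(2 * Real.pi), β * ff H θ := by
    refine intervalIntegral.integral_mono_on (by positivity) (hFc.intervalIntegrable _ _)
      (((ff_cont hH).const_mul β).intervalIntegrable _ _) ?_
    intro θ _
    have := hβ (ev θ)
    rw [norm_ev, mul_one] at this
    rw [mul_comm]
    exact mul_le_mul_of_nonneg_right this (ff_nonneg hH θ)
  rw [intervalIntegral.integral_const_mul] at h2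
  linarith

end partB


section partC

/-- projection on direction `ev ψ` -/
def pj (ψ : ℝ) (x : E2) : ℝ := ⟪ev ψ, x⟫

lemma pj_sub (ψ : ℝ) (x y : E2) : pj ψ x - pj ψ y = ⟪ev ψ, x - y⟫ := by
  simp [pj, inner_sub_right]

lemma pj_cont (ψ : ℝ) : Continuous (pj ψ) := by unfold pj; fun_prop

lemma proj_alg {ε : ℝ} (hε : 0 < ε) (hε1 : ε < 1) (ν w : E2) (hν : ‖ν‖ = 1) (ψ : ℝ)
    (h : |⟪ν, w⟫| ≤ ε * ‖w‖) :
    (|⟪ν, evp ψ⟫| - 2 * ε) * ‖w‖ ≤ |⟪ev ψ, w⟫| ∧ |⟪ev ψ, w⟫| ≤ (|⟪ν, evp ψ⟫| + 2 * ε) * ‖w‖ := by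
  have hn : ν 0 ^ 2 + ν 1 ^ 2 = 1 := by rw [← norm_sq_E2, hν]; norm_num
  set a := ⟪ν, w⟫ with ha
  set b := -ν 1 * w 0 + ν 0 * w 1 with hb
  have hW := norm_sq_E2 w
  have hW0 := norm_nonneg w
  set W := ‖w‖
  set g := |⟪ν, evp ψ⟫| with hg
  have hab : a ^ 2 + b ^ 2 = W ^ 2 := by
    rw [ha, hb, inner_E2, hW]; linear_combination (w 0 ^ 2 + w 1 ^ 2) * hn
  have hexp : ⟪ev ψ, w⟫ = a * ⟪ν, ev ψ⟫ - b * ⟪ν, evp ψ⟫ := by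
    rw [ha, hb]
    simp only [inner_E2, ev_zero, ev_one, evp_zero, evp_one]
    linear_combination (-(Real.cos ψ * w 0) - Real.sin ψ * w 1) * hn
  have hc1 : |⟪ν, ev ψ⟫| ≤ 1 := by
    have := abs_real_inner_le_norm ν (ev ψ); rwa [hν, norm_ev, mul_one] at this
  have hg1 : g ≤ 1 := by
    have := abs_real_inner_le_norm ν (evp ψ); rwa [hν, norm_evp, mul_one] at this
  have hg0 : 0 ≤ g := abs_nonneg _
  have hbW : |b| ≤ W := by
    refine abs_le_of_sq_le_sq ?_ hW0
    nlinarith [sq_nonneg a]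
  have hbl : (1 - ε) * W ≤ |b| := by
    refine le_of_sq_le_sq ?_ (abs_nonneg b)
    rw [sq_abs]
    have ha2 : a ^ 2 ≤ (ε * W) ^ 2 := by
      rw [← sq_abs a]; exact pow_le_pow_left₀ (abs_nonneg _) h 2
    nlinarith [mul_nonneg hε.le (sub_nonneg.2 hε1.le), sq_nonneg W,
      mul_nonneg (mul_nonneg hε.le (sub_nonneg.2 hε1.le)) (sq_nonneg W)]
  have hap : |a * ⟪ν, ev ψ⟫| ≤ ε * W := by
    rw [abs_mul]
    calc |a| * |⟪ν, ev ψ⟫| ≤ |a| * 1 := by gcongr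
      _ ≤ ε * W := by linarith
  have hbp : |b * ⟪ν, evp ψ⟫| = |b| * g := abs_mul _ _
  rw [hexp]
  have t1 := abs_sub_abs_le_abs_sub (b * ⟪ν, evp ψ⟫) (a * ⟪ν, ev ψ⟫)
  rw [abs_sub_comm (b * _)] at t1
  have t2 := abs_sub (a * ⟪ν, ev ψ⟫) (b * ⟪ν, evp ψ⟫)
  rw [hbp] at t1 t2
  have u1 : |b| * g ≤ W * g := by gcongr
  have u2 : (1 - ε) * W * g ≤ |b| * g := by gcongr
  have u3 : ε * W * g ≤ ε * W := by
    have : 0 ≤ ε * W := by positivity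
    nlinarith
  constructor <;> nlinarith

lemma hausdorff_lower {ψ c : ℝ} (hc : 0 < c) (A : Set E2)
    (h : ∀ y ∈ A, ∀ z ∈ A, c * ‖y - z‖ ≤ |pj ψ y - pj ψ z|) :
    ENNReal.ofReal c * μH[1] A ≤ volume (pj ψ '' A) := by
  rcases A.eq_empty_or_nonempty with rfl | hne
  · simp
  have hinj : InjOn (pj ψ) A := by
    intro y hy z hz hyz
    have := h y hy z hz
    rw [hyz, sub_self, abs_zero] at this
    have h2 : ‖y - z‖ ≤ 0 := by
      by_contra! hcon
      have := mul_pos hc hcon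
      linarith
    exact sub_eq_zero.1 (norm_le_zero_iff.1 h2)
  let k := Function.invFunOn (pj ψ) A
  have hk : ∀ y ∈ A, k (pj ψ y) = y := fun y hy => hinj.leftInvOn_invFunOn hy
  have hlip : LipschitzOnWith (Real.toNNReal c⁻¹) k (pj ψ '' A) := by
    apply LipschitzOnWith.of_dist_le_mul
    rintro _ ⟨y, hy, rfl⟩ _ ⟨z, hz, rfl⟩
    rw [hk y hy, hk z hz, dist_eq_norm, Real.dist_eq, Real.coe_toNNReal _ (by positivity),
      ← div_eq_inv_mul, le_div_iff₀ hc, mul_comm]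
    exact h y hy z hz
  have him : k '' (pj ψ '' A) = A := by
    rw [image_image]
    exact (image_congr hk).trans (by simp)
  have := hlip.hausdorffMeasure_image_le (d := 1) zero_le_one
  rw [him, hausdorffMeasure_real, ENNReal.rpow_one] at this
  calc ENNReal.ofReal c * μH[1] A
      ≤ ENNReal.ofReal c * (ENNReal.ofReal c⁻¹ * volume (pj ψ '' A)) := by gcongr; exact this
    _ = volume (pj ψ '' A) := by
      rw [← mul_assoc, ← ENNReal.ofReal_mul hc.le, mul_inv_cancel₀ hc.ne']; simp

lemma hausdorff_upper {ψ c : ℝ} (hc : 0 ≤ c) (A : Set E2)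
    (h : ∀ y ∈ A, ∀ z ∈ A, |pj ψ y - pj ψ z| ≤ c * ‖y - z‖) :
    volume (pj ψ '' A) ≤ ENNReal.ofReal c * μH[1] A := by
  have hlip : LipschitzOnWith (Real.toNNReal c) (pj ψ) A := by
    apply LipschitzOnWith.of_dist_le_mul
    intro y hy z hz
    rw [dist_eq_norm y z, Real.dist_eq, Real.coe_toNNReal _ hc]
    exact h y hy z hz
  have := hlip.hausdorffMeasure_image_le (d := 1) zero_le_one
  rwa [hausdorffMeasure_real, ENNReal.rpow_one] at this

lemma piece_bounds {ψ ε g0 : ℝ} (hε : 0 < ε) (hg0 : 0 ≤ g0) (g : E2 → ℝ) (hg : Measurable g)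
    (A : Set E2) (hA : MeasurableSet A)
    (h1 : ∀ y ∈ A, ∀ z ∈ A, (g0 - 2 * ε) * ‖y - z‖ ≤ |pj ψ y - pj ψ z|)
    (h2 : ∀ y ∈ A, ∀ z ∈ A, |pj ψ y - pj ψ z| ≤ (g0 + 2 * ε) * ‖y - z‖)
    (h3 : ∀ y ∈ A, |g y - g0| ≤ ε) :
    ∫⁻ x in A, ENNReal.ofReal (g x) ∂μH[1]
        ≤ volume (pj ψ '' A) + ENNReal.ofReal (3 * ε) * μH[1] A ∧
      volume (pj ψ '' A)
        ≤ ∫⁻ x in A, ENNReal.ofReal (g x) ∂μH[1] + ENNReal.ofReal (3 * ε) * μH[1] A := by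
  constructor
  · by_cases hc : g0 ≤ 2 * ε
    · refine le_add_left ?_
      rw [← setLIntegral_const]
      refine setLIntegral_mono' hA fun y hy => ENNReal.ofReal_le_ofReal ?_
      have := (abs_le.1 (h3 y hy)).2
      linarith
    · push Not at hc
      calc ∫⁻ x in A, ENNReal.ofReal (g x) ∂μH[1]
          ≤ ∫⁻ x in A, (ENNReal.ofReal (g0 - 2 * ε) + ENNReal.ofReal (3 * ε)) ∂μH[1] := by
            refine setLIntegral_mono' hA fun y hy => ?_
            rw [← ENNReal.ofReal_add (by linarith) (by linarith)]
            apply ENNReal.ofReal_le_ofReal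
            have := (abs_le.1 (h3 y hy)).2
            linarith
        _ = ENNReal.ofReal (g0 - 2 * ε) * μH[1] A + ENNReal.ofReal (3 * ε) * μH[1] A := by
            rw [setLIntegral_const, add_mul]
        _ ≤ _ := by
            gcongr
            exact hausdorff_lower (by linarith) A h1
  · refine (hausdorff_upper (by linarith) A h2).trans ?_
    rw [← setLIntegral_const, ← setLIntegral_const, ← lintegral_add_right _ measurable_const]
    refine setLIntegral_mono' hA fun y hy => ?_
    have := (abs_le.1 (h3 y hy)).1
    refine (ENNReal.ofReal_le_ofReal (?_ : _ ≤ g y + 3 * ε)).trans ENNReal.ofReal_add_le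
    linarith

lemma proj_area (S : Set E2) (hSm : MeasurableSet S) (hfin : μH[1] S ≠ ∞)
    (ν : E2 → E2) (hν : Measurable ν) (h1 : ∀ x ∈ S, ‖ν x‖ = 1) (hc : ContinuousOn ν S)
    (hloc : ∀ x ∈ S, ∀ ε > 0, ∃ U ∈ nhds x, ∀ y ∈ U ∩ S, ∀ z ∈ U ∩ S,
      |⟪ν x, y - z⟫| ≤ ε * ‖y - z‖)
    (ψ : ℝ) (hinj : InjOn (pj ψ) S) :
    ∫⁻ x in S, ENNReal.ofReal |⟪ν x, evp ψ⟫| ∂μH[1] = volume (pj ψ '' S) := by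
  let g : E2 → ℝ := fun x => |⟪ν x, evp ψ⟫|
  have hg : Measurable g := by
    have : Measurable fun x => ⟪ν x, evp ψ⟫ := hν.inner measurable_const
    exact this.abs
  have hgc : ContinuousOn g S := by
    have : ContinuousOn (fun x => ⟪ν x, evp ψ⟫) S := hc.inner continuousOn_const
    exact this.abs
  have key : ∀ ε : ℝ, 0 < ε → ε < 1 →
      ∫⁻ x in S, ENNReal.ofReal (g x) ∂μH[1]
        ≤ volume (pj ψ '' S) + ENNReal.ofReal (3 * ε) * μH[1] S ∧
      volume (pj ψ '' S)
        ≤ ∫⁻ x in S, ENNReal.ofReal (g x) ∂μH[1] + ENNReal.ofReal (3 * ε) * μH[1] S := by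
    intro ε hε hε1
    have hU : ∀ x, ∃ U : Set E2, (x ∈ S → IsOpen U ∧ x ∈ U ∧
        (∀ y ∈ U ∩ S, ∀ z ∈ U ∩ S, |⟪ν x, y - z⟫| ≤ ε * ‖y - z‖) ∧
        ∀ y ∈ U ∩ S, |g y - g x| ≤ ε) := by
      intro x
      by_cases hx : x ∈ S
      · obtain ⟨U, hU, hU'⟩ := hloc x hx ε hε
        have hgx := (hgc x hx)
        have : ∀ᶠ y in nhdsWithin x S, |g y - g x| ≤ ε := by
          have := (Metric.tendsto_nhds.1 hgx) ε hε
          filter_upwards [this] with y hy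
          rw [Real.dist_eq] at hy; exact hy.le
        obtain ⟨V, hV, hV'⟩ := mem_nhdsWithin_iff_exists_mem_nhds_inter.1 this
        obtain ⟨W, hW, hWo, hxW⟩ := mem_nhds_iff.1 (Filter.inter_mem hU hV)
        refine ⟨W, fun _ => ⟨hWo, hxW, ?_, ?_⟩⟩
        · intro y hy z hz
          exact hU' y ⟨(hW hy.1).1, hy.2⟩ z ⟨(hW hz.1).1, hz.2⟩
        · intro y hy
          exact hV' ⟨(hW hy.1).2, hy.2⟩
      · exact ⟨∅, fun h => absurd h hx⟩
    choose U hU using hU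
    obtain ⟨T, hTS, hTc, hTcov⟩ := TopologicalSpace.countable_cover_nhdsWithin (f := U) (s := S)
      (fun x hx => mem_nhdsWithin_of_mem_nhds ((hU x hx).1.mem_nhds (hU x hx).2.1))
    rcases S.eq_empty_or_nonempty with rfl | hSne
    · simp
    have hTne : T.Nonempty := by
      obtain ⟨x, hx⟩ := hSne
      obtain ⟨i, hi, _⟩ := mem_iUnion₂.1 (hTcov hx)
      exact ⟨i, hi⟩
    obtain ⟨x, hxT⟩ := hTc.exists_eq_range hTne
    have hxS : ∀ n, x n ∈ S := fun n => hTS (by rw [hxT]; exact mem_range_self n)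
    let A : ℕ → Set E2 := fun n => S ∩ disjointed (fun n => U (x n)) n
    have hAm : ∀ n, MeasurableSet (A n) := fun n =>
      hSm.inter (MeasurableSet.disjointed (fun m => (hU _ (hxS m)).1.measurableSet) n)
    have hAd : Pairwise (Function.onFun Disjoint A) := by
      intro i j hij
      exact ((disjoint_disjointed (fun n => U (x n))) hij).mono inter_subset_right
        inter_subset_right
    have hAU : ⋃ n, A n = S := by
      rw [← inter_iUnion, iUnion_disjointed]
      refine inter_eq_left.2 (hTcov.trans ?_)
      rw [hxT, biUnion_range]
    have hAsub : ∀ n, A n ⊆ U (x n) ∩ S := fun n y hy => ⟨disjointed_subset _ n hy.2, hy.1⟩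
    have hp : ∀ n, _ := fun n => piece_bounds (ψ := ψ) (g0 := g (x n)) hε (abs_nonneg _) g hg (A n)
      (hAm n)
      (fun y hy z hz => by
        rw [pj_sub]
        exact (proj_alg hε hε1 (ν (x n)) (y - z) (h1 _ (hxS n)) ψ
          ((hU _ (hxS n)).2.2.1 y (hAsub n hy) z (hAsub n hz))).1)
      (fun y hy z hz => by
        rw [pj_sub]
        exact (proj_alg hε hε1 (ν (x n)) (y - z) (h1 _ (hxS n)) ψ
          ((hU _ (hxS n)).2.2.1 y (hAsub n hy) z (hAsub n hz))).2)
      (fun y hy => (hU _ (hxS n)).2.2.2 y (hAsub n hy))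
    have s1 : ∫⁻ x in S, ENNReal.ofReal (g x) ∂μH[1]
        = ∑' n, ∫⁻ x in A n, ENNReal.ofReal (g x) ∂μH[1] := by
      conv_lhs => rw [← hAU]
      exact lintegral_iUnion hAm hAd _
    have s2 : μH[1] S = ∑' n, μH[1] (A n) := by
      conv_lhs => rw [← hAU]
      exact measure_iUnion hAd hAm
    have s3 : volume (pj ψ '' S) = ∑' n, volume (pj ψ '' (A n)) := by
      conv_lhs => rw [← hAU, image_iUnion]
      refine measure_iUnion ?_ ?_
      · intro i j hij
        refine Set.disjoint_left.2 ?_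
        rintro _ ⟨y, hy, rfl⟩ ⟨z, hz, hzy⟩
        have hzy' : z = y := hinj hz.1 hy.1 hzy
        subst hzy'
        exact Set.disjoint_left.1 (show Disjoint (A i) (A j) from hAd hij) hy hz
      · intro n
        exact (hAm n).image_of_continuousOn_injOn (pj_cont ψ).continuousOn
          (hinj.mono inter_subset_left)
    rw [s1, s2, s3, ← ENNReal.tsum_mul_left, ← ENNReal.tsum_add, ← ENNReal.tsum_add]
    exact ⟨ENNReal.tsum_le_tsum fun n => (hp n).1, ENNReal.tsum_le_tsum fun n => (hp n).2⟩
  have lim : ∀ a b : ℝ≥0∞, (∀ ε : ℝ, 0 < ε → ε < 1 → a ≤ b + ENNReal.ofReal (3 * ε) * μH[1] S) →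
      a ≤ b := by
    intro a b hab
    have ht : Filter.Tendsto (fun ε : ℝ => b + ENNReal.ofReal (3 * ε) * μH[1] S)
        (nhdsWithin 0 (Ioi 0)) (nhds (b + ENNReal.ofReal (3 * 0) * μH[1] S)) := by
      refine Filter.Tendsto.mono_left ?_ nhdsWithin_le_nhds
      refine tendsto_const_nhds.add ?_
      refine ENNReal.Tendsto.mul_const ?_ (Or.inr hfin)
      exact (ENNReal.continuous_ofReal.comp (by fun_prop : Continuous fun ε : ℝ => 3 * ε)).tendsto 0
    simp only [mul_zero, ENNReal.ofReal_zero, zero_mul, add_zero] at ht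
    refine ge_of_tendsto ht ?_
    filter_upwards [Ioo_mem_nhdsGT (zero_lt_one (α := ℝ))] with ε hε
    exact hab ε hε.1 hε.2
  exact le_antisymm (lim _ _ fun ε h h' => (key ε h h').1) (lim _ _ fun ε h h' => (key ε h h').2)

end partC


section partD
variable {Ω : Set E2} {u : E2 → ℝ}

lemma exists_frontier (hΩo : IsOpen Ω) {x y : E2} (hx : x ∈ Ω) (hy : y ∉ Ω) :
    ∃ z ∈ segment ℝ x y, z ∈ frontier Ω := by
  by_contra! hcon
  have hp : IsPreconnected (segment ℝ x y) := (convex_segment x y).isPreconnected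
  have := hp Ω (closure Ω)ᶜ hΩo isClosed_closure.isOpen_compl ?_ ⟨x, left_mem_segment ℝ x y, hx⟩
    ⟨y, right_mem_segment ℝ x y, ?_⟩
  · obtain ⟨z, _, hz1, hz2⟩ := this
    exact hz2 (subset_closure hz1)
  · intro z hz
    by_cases h : z ∈ closure Ω
    · left
      by_contra h2
      exact hcon z hz (by rw [hΩo.frontier_eq]; exact ⟨h, h2⟩)
    · right; exact h
  · intro h
    exact hcon y (right_mem_segment ℝ x y) (by rw [hΩo.frontier_eq]; exact ⟨h, hy⟩)

lemma u_contDiffAt (hΩo : IsOpen Ω) (hu : MemPhi0 Ω u) {x : E2} (hx : x ∈ Ω) :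
    ContDiffAt ℝ 1 u x :=
  hu.c1.contDiffAt (Filter.mem_of_superset (hΩo.mem_nhds hx) subset_closure)

lemma u_diffAt (hΩo : IsOpen Ω) (hu : MemPhi0 Ω u) {x : E2} (hx : x ∈ Ω) :
    DifferentiableAt ℝ u x :=
  (u_contDiffAt hΩo hu hx).differentiableAt (by norm_num)

lemma inner_grad (x v : E2) : ⟪gradient u x, v⟫ = fderiv ℝ u x v := by
  rw [← toDual_gradient]; rfl

lemma norm_grad (x : E2) : ‖gradient u x‖ = ‖fderiv ℝ u x‖ := by
  rw [← toDual_gradient, LinearIsometryEquiv.norm_map]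

lemma line_deriv (hΩo : IsOpen Ω) (hu : MemPhi0 Ω u) {x : E2} (hx : x ∈ Ω) (v : E2) :
    HasDerivAt (fun s : ℝ => u (x + s • v)) ⟪gradient u x, v⟫ 0 := by
  rw [inner_grad]
  exact (u_diffAt hΩo hu hx).hasFDerivAt.hasLineDerivAt v

lemma concave_ineq (hΩo : IsOpen Ω) (hu : MemPhi0 Ω u) {x y : E2} (hx : x ∈ Ω) (hy : y ∈ Ω) :
    u y ≤ u x + ⟪gradient u x, y - x⟫ := by
  have h := (line_deriv hΩo hu hx (y - x)).tendsto_slope_zero_right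
  have h2 : u y - u x ≤ ⟪gradient u x, y - x⟫ := by
    refine ge_of_tendsto h ?_
    filter_upwards [Ioo_mem_nhdsGT (zero_lt_one (α := ℝ))] with s hs
    have hc := hu.concave.2 hx hy (sub_nonneg.2 hs.2.le) hs.1.le (by ring)
    have he : (1 - s) • x + s • y = x + s • (y - x) := by
      rw [smul_sub, sub_smul, one_smul]; abel
    rw [he] at hc
    simp only [smul_eq_mul] at hc
    simp only [zero_add, zero_smul, add_zero, smul_eq_mul]
    rw [← div_eq_inv_mul, le_div_iff₀ hs.1]
    linarith
  linarith

lemma level_mem (hΩo : IsOpen Ω) (hu : MemPhi0 Ω u) {t : ℝ} (ht : 0 < t) {x : E2}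
    (hx : x ∈ levelSet Ω u t) : x ∈ Ω := by
  by_contra h
  have := hu.bzero x (by rw [hΩo.frontier_eq]; exact ⟨hx.1, h⟩)
  rw [hx.2] at this
  linarith

lemma grad_measurable : Measurable (gradient u) := by
  have : gradient u = fun x => (InnerProductSpace.toDual ℝ E2).symm (fderiv ℝ u x) := rfl
  rw [this]
  exact (InnerProductSpace.toDual ℝ E2).symm.continuous.measurable.comp (measurable_fderiv ℝ u)

lemma nu_measurable : Measurable (nuLevel u) :=
  ((grad_measurable.norm.inv).smul grad_measurable).neg

lemma grad_continuousOn (hΩo : IsOpen Ω) (hu : MemPhi0 Ω u) : ContinuousOn (gradient u) Ω := by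
  have h1 : ContinuousOn (fderiv ℝ u) Ω :=
    (hu.c1.mono subset_closure).continuousOn_fderiv_of_isOpen hΩo (by norm_num)
  exact (InnerProductSpace.toDual ℝ E2).symm.continuous.comp_continuousOn h1

lemma grad_ne (hΩo : IsOpen Ω) (hu : MemPhi0 Ω u) {t : ℝ} {x z : E2} (hx : x ∈ Ω) (hxt : u x = t)
    (hz : z ∈ superLevel Ω u t) : gradient u x ≠ 0 := by
  intro h
  have := concave_ineq hΩo hu hx hz.1
  rw [h, inner_zero_left] at this
  have := hz.2
  linarith

lemma nu_norm {x : E2} (h : gradient u x ≠ 0) : ‖nuLevel u x‖ = 1 := by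
  have : ‖gradient u x‖ ≠ 0 := norm_ne_zero_iff.2 h
  rw [nuLevel, norm_neg, norm_smul, norm_inv, norm_norm, inv_mul_cancel₀ this]

lemma inner_grad_nu {x : E2} (h : gradient u x ≠ 0) (v : E2) :
    ⟪gradient u x, v⟫ = -(‖gradient u x‖ * ⟪nuLevel u x, v⟫) := by
  have : ‖gradient u x‖ ≠ 0 := norm_ne_zero_iff.2 h
  rw [nuLevel, inner_neg_left, inner_smul_left]
  simp only [map_inv₀, conj_trivial]
  field_simp

lemma nu_continuousOn (hΩo : IsOpen Ω) (hu : MemPhi0 Ω u) {S : Set E2} (hS : S ⊆ Ω)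
    (h : ∀ x ∈ S, gradient u x ≠ 0) : ContinuousOn (nuLevel u) S := by
  have hg := (grad_continuousOn hΩo hu).mono hS
  exact ((hg.norm.inv₀ fun x hx => norm_ne_zero_iff.2 (h x hx)).smul hg).neg

lemma nu_local (hΩo : IsOpen Ω) (hu : MemPhi0 Ω u) {t : ℝ} {x : E2} (hx : x ∈ Ω)
    (hg : gradient u x ≠ 0) {ε : ℝ} (hε : 0 < ε) :
    ∃ U ∈ nhds x, ∀ y ∈ U ∩ levelSet Ω u t, ∀ z ∈ U ∩ levelSet Ω u t,
      |⟪nuLevel u x, y - z⟫| ≤ ε * ‖y - z‖ := by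
  have hn : 0 < ‖gradient u x‖ := norm_pos_iff.2 hg
  have hs := (u_contDiffAt hΩo hu hx).hasStrictFDerivAt (by norm_num)
  have := (hs.isLittleO.def (mul_pos hε hn))
  rw [nhds_prod_eq] at this
  obtain ⟨U, hU, h⟩ := Filter.mem_prod_self_iff.1 this
  refine ⟨U, hU, fun y hy z hz => ?_⟩
  have h1 : ‖u y - u z - fderiv ℝ u x (y - z)‖ ≤ ε * ‖gradient u x‖ * ‖y - z‖ :=
    h (mk_mem_prod hy.1 hz.1)
  simp only [hy.2.2, hz.2.2, sub_self, zero_sub, norm_neg] at h1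
  rw [← inner_grad, inner_grad_nu hg, norm_neg, norm_mul, norm_norm, Real.norm_eq_abs] at h1
  have h2 : ‖gradient u x‖ * |⟪nuLevel u x, y - z⟫| ≤ ‖gradient u x‖ * (ε * ‖y - z‖) := by
    linarith
  exact le_of_mul_le_mul_left h2 hn

lemma u_cont (hu : MemPhi0 Ω u) : ContinuousOn u (closure Ω) := hu.c1.continuousOn

lemma level_compact (hΩb : Bornology.IsBounded Ω) (hu : MemPhi0 Ω u) (t : ℝ) :
    IsCompact (levelSet Ω u t) := by
  have hc : IsCompact (closure Ω) := hΩb.isCompact_closure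
  have : IsClosed (closure Ω ∩ u ⁻¹' {t}) :=
    (u_cont hu).preimage_isClosed_of_isClosed isClosed_closure isClosed_singleton
  exact hc.of_isClosed_subset this inter_subset_left

lemma pj_image_bounded (ψ : ℝ) {S : Set E2} (hS : Bornology.IsBounded S) :
    volume (pj ψ '' S) < ∞ := by
  have : LipschitzWith 1 (pj ψ) := by
    apply LipschitzWith.of_dist_le_mul
    intro x y
    rw [Real.dist_eq, pj_sub, dist_eq_norm]
    have := abs_real_inner_le_norm (ev ψ) (x - y)
    rw [norm_ev] at this
    simpa using this
  exact (this.isBounded_image hS).measure_lt_top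

lemma level_finite (hΩo : IsOpen Ω) (hΩb : Bornology.IsBounded Ω) (hu : MemPhi0 Ω u) {t : ℝ}
    (ht : 0 < t) (hne : (superLevel Ω u t).Nonempty) : μH[1] (levelSet Ω u t) < ∞ := by
  obtain ⟨z, hz⟩ := hne
  refine (level_compact hΩb hu t).measure_lt_top_of_nhdsWithin fun x hx => ?_
  have hxΩ := level_mem hΩo hu ht hx
  have hg := grad_ne hΩo hu hxΩ hx.2 hz
  obtain ⟨U, hU, h⟩ := nu_local (t := t) hΩo hu hxΩ hg (ε := 1/4) (by norm_num)
  obtain ⟨φ, hφ⟩ := exists_ev (nuLevel u x)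
  rw [nu_norm hg, one_smul] at hφ
  refine ⟨U ∩ levelSet Ω u t, Filter.inter_mem (mem_nhdsWithin_of_mem_nhds hU)
    self_mem_nhdsWithin, ?_⟩
  let ψ := φ - Real.pi / 2
  have hin : |⟪nuLevel u x, evp ψ⟫| = 1 := by
    rw [hφ, inner_E2, ev_zero, ev_one, evp_zero, evp_one]
    simp only [ψ, Real.sin_sub_pi_div_two, Real.cos_sub_pi_div_two, neg_neg]
    rw [← sq, ← sq, Real.cos_sq_add_sin_sq, abs_one]
  have hl := hausdorff_lower (ψ := ψ) (c := 1/2) (by norm_num) (U ∩ levelSet Ω u t) (by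
    intro y hy z hz
    rw [pj_sub]
    have := (proj_alg (ε := 1/4) (by norm_num) (by norm_num) (nuLevel u x) (y - z) (nu_norm hg) ψ
      (h y hy z hz)).1
    rw [hin] at this
    linarith)
  have hb := pj_image_bounded ψ (S := U ∩ levelSet Ω u t)
    ((level_compact hΩb hu t).isBounded.subset inter_subset_right)
  by_contra hcon
  rw [not_lt, top_le_iff] at hcon
  rw [hcon, ENNReal.mul_top (by simp)] at hl
  exact absurd (lt_of_le_of_lt hl hb) (lt_irrefl _)

/-- signed part of the level set -/
def sgnLevel (Ω : Set E2) (u : E2 → ℝ) (t ψ σ : ℝ) : Set E2 :=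
  {x ∈ levelSet Ω u t | 0 < σ * ⟪nuLevel u x, evp ψ⟫}

lemma pj_evp (ψ : ℝ) (x : E2) (s : ℝ) : pj ψ (x + s • evp ψ) = pj ψ x := by
  simp only [pj, inner_add_right, inner_smul_right]
  rw [inner_E2 (ev ψ) (evp ψ), ev_zero, ev_one, evp_zero, evp_one]
  ring

lemma pj_eq (ψ : ℝ) (p q : E2) (h : pj ψ p = pj ψ q) :
    ∃ c : ℝ, q = p + c • evp ψ := by
  refine ⟨⟪evp ψ, q - p⟫, ?_⟩
  have h1 : ⟪ev ψ, q - p⟫ = 0 := by rw [← pj_sub, h, sub_self]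
  have hsc := Real.sin_sq_add_cos_sq ψ
  rw [inner_E2, ev_zero, ev_one] at h1
  simp only [PiLp.sub_apply] at h1
  ext i
  rw [inner_E2, evp_zero, evp_one]
  fin_cases i
  · simp [evp]
    linear_combination Real.cos ψ * h1 - (q 0 - p 0) * hsc
  · simp [evp]
    linear_combination Real.sin ψ * h1 - (q 1 - p 1) * hsc

lemma sgn_lt (hΩo : IsOpen Ω) (hu : MemPhi0 Ω u) {t ψ σ c : ℝ} (hσ : σ ^ 2 = 1)
    (ht : 0 < t) (hne : (superLevel Ω u t).Nonempty) {p : E2} (hp : p ∈ sgnLevel Ω u t ψ σ)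
    (hq : p + c • evp ψ ∈ levelSet Ω u t) : σ * c ≤ 0 := by
  obtain ⟨z, hz⟩ := hne
  have hpΩ := level_mem hΩo hu ht hp.1
  have hqΩ := level_mem hΩo hu ht hq
  have hg := grad_ne hΩo hu hpΩ hp.1.2 hz
  have h := concave_ineq hΩo hu hpΩ hqΩ
  rw [hq.2, hp.1.2, add_sub_cancel_left, inner_smul_right, inner_grad_nu hg] at h
  have hn : 0 < ‖gradient u p‖ := norm_pos_iff.2 hg
  by_contra! hcon
  have h1 := mul_pos (mul_pos hn hcon) hp.2
  have : ‖gradient u p‖ * (σ * c) * (σ * ⟪nuLevel u p, evp ψ⟫)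
      = σ ^ 2 * (‖gradient u p‖ * c * ⟪nuLevel u p, evp ψ⟫) := by ring
  rw [this, hσ] at h1
  linarith

lemma sgn_inj (hΩo : IsOpen Ω) (hu : MemPhi0 Ω u) {t ψ σ : ℝ} (hσ : σ ^ 2 = 1)
    (ht : 0 < t) (hne : (superLevel Ω u t).Nonempty) : InjOn (pj ψ) (sgnLevel Ω u t ψ σ) := by
  intro p hp q hq hpq
  obtain ⟨c, hc⟩ := pj_eq ψ p q hpq
  have h1 := sgn_lt (c := c) hΩo hu hσ ht hne hp (hc ▸ hq.1)
  have h2 := sgn_lt (c := -c) hΩo hu hσ ht hne hq (by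
    have : q + (-c) • evp ψ = p := by rw [hc]; simp
    rw [this]; exact hp.1)
  have h3 : σ * c = 0 := by linarith
  have hσ0 : σ ≠ 0 := by rintro rfl; norm_num at hσ
  have hc0 : c = 0 := (mul_eq_zero.1 h3).resolve_left hσ0
  rw [hc, hc0]; simp

lemma sgn_image (hΩo : IsOpen Ω) (hΩb : Bornology.IsBounded Ω) (hΩc : Convex ℝ Ω)
    (hu : MemPhi0 Ω u) {t ψ σ : ℝ} (hσ : σ ^ 2 = 1)
    (ht : 0 < t) (hne : (superLevel Ω u t).Nonempty) :
    pj ψ '' sgnLevel Ω u t ψ σ = pj ψ '' superLevel Ω u t := by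
  apply Subset.antisymm
  · rintro _ ⟨p, hp, rfl⟩
    have hpΩ := level_mem hΩo hu ht hp.1
    have hg := grad_ne hΩo hu hpΩ hp.1.2 hne.some_mem
    have hn : 0 < ‖gradient u p‖ := norm_pos_iff.2 hg
    have hd := (line_deriv hΩo hu hpΩ ((-σ) • evp ψ)).tendsto_slope_zero_right
    have hpos : 0 < ⟪gradient u p, (-σ) • evp ψ⟫ := by
      rw [inner_smul_right, inner_grad_nu hg]
      have := mul_pos hn hp.2
      linarith
    have h1 := hd.eventually (lt_mem_nhds hpos)
    have h2 : ∀ᶠ s : ℝ in nhdsWithin 0 (Ioi 0), p + s • ((-σ) • evp ψ) ∈ Ω := by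
      have hc : ContinuousAt (fun s : ℝ => p + s • ((-σ) • evp ψ)) 0 := by fun_prop
      exact nhdsWithin_le_nhds (hc.eventually (hΩo.mem_nhds (by simpa using hpΩ)))
    obtain ⟨s, h1, h2, h3⟩ := (h1.and (h2.and self_mem_nhdsWithin)).exists
    simp only [zero_add, zero_smul, add_zero, smul_eq_mul] at h1
    have hs : (0 : ℝ) < s := h3
    have h4 := (mul_pos_iff_of_pos_left (inv_pos.2 hs)).1 h1
    rw [hp.1.2] at h4
    refine ⟨p + s • ((-σ) • evp ψ), ⟨h2, by linarith⟩, ?_⟩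
    rw [smul_smul, pj_evp]
  · rintro _ ⟨z, hz, rfl⟩
    obtain ⟨R, hR⟩ := hΩb.subset_ball z
    have hy : z + R • (σ • evp ψ) ∉ Ω := by
      intro h
      have hRp : 0 < R := by
        have := hR hz.1
        rw [Metric.mem_ball, dist_self] at this
        exact this
      have := hR h
      have hσa : |σ| = 1 := by
        rcases sq_eq_one_iff.1 hσ with h | h <;> simp [h]
      rw [mem_ball_iff_norm, add_sub_cancel_left, norm_smul, norm_smul, norm_evp,
        Real.norm_eq_abs, Real.norm_eq_abs, hσa, abs_of_pos hRp] at this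
      linarith
    obtain ⟨y', hy'seg, hy'f⟩ := exists_frontier hΩo hz.1 hy
    have hy'c : y' ∈ closure Ω := frontier_subset_closure hy'f
    have hseg : segment ℝ z y' ⊆ closure Ω :=
      hΩc.closure.segment_subset (subset_closure hz.1) hy'c
    have hut : t ∈ u '' segment ℝ z y' := by
      have := (convex_segment z y').isPreconnected.intermediate_value
        (right_mem_segment ℝ z y') (left_mem_segment ℝ z y') ((u_cont hu).mono hseg)
      refine this ⟨?_, hz.2.le⟩
      rw [hu.bzero y' hy'f]; exact ht.le
    obtain ⟨p, hpseg, hpt⟩ := hut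
    have hpl : p ∈ levelSet Ω u t := ⟨hseg hpseg, hpt⟩
    have hpΩ := level_mem hΩo hu ht hpl
    have hp2 : p ∈ segment ℝ z (z + R • (σ • evp ψ)) :=
      (convex_segment _ _).segment_subset (left_mem_segment ℝ _ _) hy'seg hpseg
    rw [segment_eq_image'] at hp2
    obtain ⟨θ, hθ, hθp⟩ := hp2
    have hpe : p = z + (θ * R * σ) • evp ψ := by
      rw [← hθp]
      simp only [add_sub_cancel_left, smul_smul, mul_assoc]
    refine ⟨p, ⟨hpl, ?_⟩, by rw [hpe, pj_evp]⟩
    have hg := grad_ne hΩo hu hpΩ hpt hz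
    have hn : 0 < ‖gradient u p‖ := norm_pos_iff.2 hg
    have hci := concave_ineq hΩo hu hpΩ hz.1
    have hzp : z - p = (-(θ * R * σ)) • evp ψ := by rw [hpe]; simp
    rw [hzp, inner_smul_right, inner_grad_nu hg, hpt] at hci
    have hRp : 0 < R := by
      have := hR hz.1
      rw [Metric.mem_ball, dist_self] at this
      exact this
    have hz2 := hz.2
    have hpos : 0 < (θ * R * ‖gradient u p‖) * (σ * ⟪nuLevel u p, evp ψ⟫) := by linarith
    exact pos_of_mul_pos_right hpos (by have := hθ.1; positivity)

lemma sgn_area (hΩo : IsOpen Ω) (hΩb : Bornology.IsBounded Ω) (hΩc : Convex ℝ Ω)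
    (hu : MemPhi0 Ω u) {t ψ σ : ℝ} (hσ : σ ^ 2 = 1)
    (ht : 0 < t) (hne : (superLevel Ω u t).Nonempty) :
    MeasurableSet (sgnLevel Ω u t ψ σ) ∧
    ∫⁻ x in sgnLevel Ω u t ψ σ, ENNReal.ofReal |⟪nuLevel u x, evp ψ⟫| ∂μH[1]
      = volume (pj ψ '' superLevel Ω u t) := by
  have hsub : sgnLevel Ω u t ψ σ ⊆ levelSet Ω u t := fun x hx => hx.1
  have hΩ' : sgnLevel Ω u t ψ σ ⊆ Ω := fun x hx => level_mem hΩo hu ht hx.1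
  have hg : ∀ x ∈ sgnLevel Ω u t ψ σ, gradient u x ≠ 0 := fun x hx =>
    grad_ne hΩo hu (hΩ' hx) hx.1.2 hne.some_mem
  have hm : MeasurableSet (sgnLevel Ω u t ψ σ) := by
    have h1 : Measurable fun x => σ * ⟪nuLevel u x, evp ψ⟫ :=
      (nu_measurable.inner measurable_const).const_mul σ
    exact (level_compact hΩb hu t).measurableSet.inter (measurableSet_lt measurable_const h1)
  refine ⟨hm, ?_⟩
  rw [← sgn_image (σ := σ) hΩo hΩb hΩc hu hσ ht hne]
  refine proj_area _ hm ?_ _ nu_measurable (fun x hx => nu_norm (hg x hx))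
    (nu_continuousOn hΩo hu hΩ' hg) ?_ ψ (sgn_inj hΩo hu hσ ht hne)
  · exact (lt_of_le_of_lt (measure_mono hsub) (level_finite hΩo hΩb hu ht hne)).ne
  · intro x hx ε hε
    obtain ⟨U, hU, h⟩ := nu_local (t := t) hΩo hu (hΩ' hx) (hg x hx) hε
    exact ⟨U, hU, fun y hy z hz => h y ⟨hy.1, hsub hy.2⟩ z ⟨hz.1, hsub hz.2⟩⟩

lemma level_area (hΩo : IsOpen Ω) (hΩb : Bornology.IsBounded Ω) (hΩc : Convex ℝ Ω)
    (hu : MemPhi0 Ω u) {t : ℝ} (ψ : ℝ)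
    (ht : 0 < t) (hne : (superLevel Ω u t).Nonempty) :
    ∫⁻ x in levelSet Ω u t, ENNReal.ofReal |⟪nuLevel u x, evp ψ⟫| ∂μH[1]
      = 2 * volume (pj ψ '' superLevel Ω u t) := by
  obtain ⟨m1, a1⟩ := sgn_area (ψ := ψ) (σ := 1) hΩo hΩb hΩc hu (by norm_num) ht hne
  obtain ⟨m2, a2⟩ := sgn_area (ψ := ψ) (σ := -1) hΩo hΩb hΩc hu (by norm_num) ht hne
  set S := levelSet Ω u t with hS
  set P := sgnLevel Ω u t ψ 1 with hP
  set N := sgnLevel Ω u t ψ (-1) with hN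
  rw [← lintegral_inter_add_sdiff (B := P) _ S m1, ← lintegral_inter_add_sdiff (B := N) _ (S \ P) m2]
  have e1 : S ∩ P = P := inter_eq_right.2 fun x hx => hx.1
  have e2 : (S \ P) ∩ N = N := by
    refine inter_eq_right.2 fun x hx => ⟨hx.1, fun h => ?_⟩
    have := hx.2
    have := h.2
    linarith
  have e3 : ∫⁻ x in (S \ P) \ N, ENNReal.ofReal |⟪nuLevel u x, evp ψ⟫| ∂μH[1] = 0 := by
    have hm : MeasurableSet ((S \ P) \ N) :=
      ((level_compact hΩb hu t).measurableSet.diff m1).diff m2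
    rw [setLIntegral_congr_fun (g := fun _ => 0) hm, lintegral_zero]
    intro x hx
    have h1 : ¬ 0 < 1 * ⟪nuLevel u x, evp ψ⟫ := fun h => hx.1.2 ⟨hx.1.1, h⟩
    have h2 : ¬ 0 < -1 * ⟪nuLevel u x, evp ψ⟫ := fun h => hx.2 ⟨hx.1.1, h⟩
    have : ⟪nuLevel u x, evp ψ⟫ = 0 := by linarith
    simp [this]
  rw [e1, e2, e3, a1, a2, add_zero, two_mul]

end partD

section partE

variable {H : E2 → ℝ} {Ω : Set E2} {u : E2 → ℝ}

lemma H_cont (hH : IsAnisoNorm H) {β : ℝ} (hβ : ∀ ξ, H ξ ≤ β * ‖ξ‖) : Continuous H := by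
  have hb : 0 ≤ β := by
    have := (hH.nonneg (ev 0)).trans (hβ (ev 0)); rwa [norm_ev, mul_one] at this
  refine (LipschitzWith.of_dist_le_mul (K := β.toNNReal) fun x y => ?_).continuous
  rw [Real.dist_eq, dist_eq_norm, Real.coe_toNNReal _ hb, abs_le]
  have h1 := H_add hH (x - y) y
  have h2 := H_add hH (y - x) x
  have h3 := hβ (x - y)
  have h4 := hβ (y - x)
  rw [sub_add_cancel] at h1 h2
  rw [norm_sub_rev] at h4
  constructor <;> linarith

lemma grad_bdd (hΩo : IsOpen Ω) (hΩb : Bornology.IsBounded Ω) (hΩc : Convex ℝ Ω)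
    (hne : Ω.Nonempty) (hu : MemPhi0 Ω u) :
    BddAbove ((fun x => ‖gradient u x‖) '' closure Ω) := by
  have hintr : (interior (closure Ω)).Nonempty :=
    hne.mono (interior_maximal subset_closure hΩo)
  have hud : UniqueDiffOn ℝ (closure Ω) := uniqueDiffOn_convex hΩc.closure hintr
  have hc := (hu.c1.continuousOn_fderivWithin hud (by norm_num)).norm
  obtain ⟨C, hC⟩ := hΩb.isCompact_closure.bddAbove_image hc
  refine ⟨C, ?_⟩
  rintro _ ⟨x, hx, rfl⟩
  have h1 : ‖fderivWithin ℝ u (closure Ω) x‖ ≤ C := hC ⟨x, hx, rfl⟩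
  simp only [norm_grad]
  by_cases hd : DifferentiableAt ℝ u x
  · rwa [hd.fderivWithin (hud x hx)] at h1
  · rw [fderiv_zero_of_not_differentiableAt hd, norm_zero]
    exact (norm_nonneg _).trans h1

/-- The gradient bound. -/
def gM (Ω : Set E2) (u : E2 → ℝ) : ℝ := sSup ((fun x => ‖gradient u x‖) '' closure Ω)

lemma gM_nonneg : 0 ≤ gM Ω u := by
  apply Real.sSup_nonneg
  rintro _ ⟨x, _, rfl⟩
  exact norm_nonneg _

lemma u_lip (hΩo : IsOpen Ω) (hΩb : Bornology.IsBounded Ω) (hΩc : Convex ℝ Ω)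
    (hne : Ω.Nonempty) (hu : MemPhi0 Ω u) {x y : E2} (hx : x ∈ closure Ω) (hy : y ∈ closure Ω) :
    |u x - u y| ≤ gM Ω u * ‖x - y‖ := by
  have h1 : LipschitzOnWith (gM Ω u).toNNReal u Ω := by
    refine hΩc.lipschitzOnWith_of_nnnorm_fderiv_le (fun x hx => u_diffAt hΩo hu hx) ?_
    intro x hx
    rw [← NNReal.coe_le_coe, coe_nnnorm, Real.coe_toNNReal _ gM_nonneg, ← norm_grad]
    exact le_csSup (grad_bdd hΩo hΩb hΩc hne hu) ⟨x, subset_closure hx, rfl⟩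
  have h2 := h1.closure (u_cont hu)
  have := h2.dist_le_mul x hx y hy
  rwa [Real.dist_eq, dist_eq_norm, Real.coe_toNNReal _ gM_nonneg] at this

lemma super_fat (hΩo : IsOpen Ω) (hΩb : Bornology.IsBounded Ω) (hΩc : Convex ℝ Ω)
    (hu : MemPhi0 Ω u) {t1 t2 δ : ℝ} (h1 : 0 < t1) (h12 : t1 < t2)
    (hδ : gM Ω u * δ ≤ t2 - t1) {x y : E2} (hx : x ∈ superLevel Ω u t2) (hxy : ‖x - y‖ ≤ δ) :
    y ∈ superLevel Ω u t1 := by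
  have hne : Ω.Nonempty := ⟨x, hx.1⟩
  have hx2 : t2 < u x := hx.2
  have key : ∀ z ∈ closure Ω, ‖x - z‖ ≤ δ → t1 < u z := by
    intro z hz hxz
    have := u_lip hΩo hΩb hΩc hne hu (subset_closure hx.1) hz
    have h3 := mul_le_mul_of_nonneg_left hxz (gM_nonneg (Ω := Ω) (u := u))
    have := (abs_le.1 this).2
    linarith
  have hy : y ∈ Ω := by
    by_contra hy
    obtain ⟨z, hz, hzf⟩ := exists_frontier hΩo hx.1 hy
    have hn : ‖x - z‖ ≤ ‖x - y‖ := by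
      obtain ⟨a, b, ha, hb, hab, rfl⟩ := hz
      have : x - (a • x + b • y) = b • (x - y) := by
        have : a = 1 - b := by linarith
        subst this; module
      rw [this, norm_smul, Real.norm_eq_abs, abs_of_nonneg hb]
      exact mul_le_of_le_one_left (norm_nonneg _) (by linarith)
    have := key z (frontier_subset_closure hzf) (hn.trans hxy)
    rw [hu.bzero z hzf] at this
    linarith
  exact ⟨hy, key y (subset_closure hy) hxy⟩

lemma gM_pos (hΩo : IsOpen Ω) (hΩb : Bornology.IsBounded Ω) (hΩc : Convex ℝ Ω)
    (hu : MemPhi0 Ω u) {t : ℝ} (h1 : 0 < t) (hne : (superLevel Ω u t).Nonempty) :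
    0 < gM Ω u := by
  rcases (gM_nonneg (Ω := Ω) (u := u)).lt_or_eq with h | h
  · exact h
  exfalso
  obtain ⟨x, hx⟩ := hne
  have hall : ∀ y : E2, y ∈ Ω := fun y =>
    (super_fat (t1 := t / 2) hΩo hΩb hΩc hu (by linarith) (by linarith)
      (δ := ‖x - y‖) (by rw [← h]; linarith) hx le_rfl).1
  have : Bornology.IsBounded (univ : Set E2) := hΩb.subset fun y _ => hall y
  exact NormedSpace.unbounded_univ ℝ E2 this

lemma super_convex (hu : MemPhi0 Ω u) (t : ℝ) : Convex ℝ (superLevel Ω u t) :=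
  hu.concave.convex_gt t

lemma pj_fat (hΩo : IsOpen Ω) (hΩb : Bornology.IsBounded Ω) (hΩc : Convex ℝ Ω)
    (hu : MemPhi0 Ω u) {t1 t2 δ : ℝ} (h1 : 0 < t1) (h12 : t1 < t2) (hδ0 : 0 ≤ δ)
    (hδ : gM Ω u * δ ≤ t2 - t1) (hne : (superLevel Ω u t2).Nonempty) (ψ : ℝ) :
    volume (pj ψ '' superLevel Ω u t2) + ENNReal.ofReal (2 * δ) ≤
      volume (pj ψ '' superLevel Ω u t1) := by
  set A := pj ψ '' superLevel Ω u t2 with hA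
  have hAne : A.Nonempty := hne.image _
  have hlip : LipschitzWith 1 (pj ψ) := by
    apply LipschitzWith.of_dist_le_mul
    intro x y
    rw [Real.dist_eq, pj_sub, dist_eq_norm]
    have := abs_real_inner_le_norm (ev ψ) (x - y)
    rw [norm_ev] at this
    simpa using this
  have hAb : Bornology.IsBounded A := hlip.isBounded_image (hΩb.subset fun x hx => hx.1)
  have hbb := hAb.bddBelow
  have hba := hAb.bddAbove
  set a := sInf A
  set b := sSup A
  have hab : a ≤ b := csInf_le_csSup hAne hbb hba
  have hsub : A ⊆ Icc a b := fun x hx => ⟨csInf_le hbb hx, le_csSup hba hx⟩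
  have hfat : ∀ p ∈ A, ∀ q, |q - p| ≤ δ → q ∈ pj ψ '' superLevel Ω u t1 := by
    rintro _ ⟨x, hx, rfl⟩ q hq
    refine ⟨x + (q - pj ψ x) • ev ψ, super_fat hΩo hΩb hΩc hu h1 h12 hδ hx ?_, ?_⟩
    · rw [sub_add_cancel_left, norm_neg, norm_smul, norm_ev, mul_one]; exact hq
    · unfold pj
      rw [inner_add_right, inner_smul_right, real_inner_self_eq_norm_sq, norm_ev]; ring
  have hconv : Convex ℝ A := by
    have := (super_convex hu t2).linear_image (innerₛₗ ℝ (ev ψ))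
    exact this
  have hoc : A.OrdConnected := hconv.ordConnected
  have hsup : Ioo (a - δ) (b + δ) ⊆ pj ψ '' superLevel Ω u t1 := by
    intro q hq
    obtain ⟨p, hp, hp1⟩ := exists_lt_of_csInf_lt hAne (show sInf A < q + δ by
      have := hq.1; change a < q + δ; linarith)
    obtain ⟨p', hp', hp1'⟩ := exists_lt_of_lt_csSup hAne (show q - δ < sSup A by
      have := hq.2; change q - δ < b; linarith)
    by_cases c1 : q - δ ≤ p
    · exact hfat p hp q (abs_le.2 ⟨by linarith, by linarith⟩)
    by_cases c2 : p' ≤ q + δ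
    · exact hfat p' hp' q (abs_le.2 ⟨by linarith, by linarith⟩)
    push Not at c1 c2
    exact hfat q (hoc.out hp hp' ⟨by linarith, by linarith⟩) q (by simpa using hδ0)
  calc volume A + ENNReal.ofReal (2 * δ) ≤ ENNReal.ofReal (b - a) + ENNReal.ofReal (2 * δ) := by
        gcongr; rw [← Real.volume_Icc]; exact measure_mono hsub
    _ = volume (Ioo (a - δ) (b + δ)) := by
        rw [Real.volume_Ioo, ← ENNReal.ofReal_add (by linarith) (by linarith)]
        congr 1; ring
    _ ≤ _ := measure_mono hsup

/-- The perimeter as a lower integral. -/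
def LL (H : E2 → ℝ) (Ω : Set E2) (u : E2 → ℝ) (t : ℝ) : ℝ≥0∞ :=
  ∫⁻ x in levelSet Ω u t, ENNReal.ofReal (H (nuLevel u x)) ∂(μH[1] : Measure E2)

lemma nu_norm_le (x : E2) : ‖nuLevel u x‖ ≤ 1 := by
  by_cases h : gradient u x = 0
  · simp [nuLevel, h]
  · exact (nu_norm h).le

lemma LL_finite (hH : IsAnisoNorm H) {β : ℝ} (hβ : ∀ ξ, H ξ ≤ β * ‖ξ‖) (hΩo : IsOpen Ω)
    (hΩb : Bornology.IsBounded Ω) (hu : MemPhi0 Ω u) {t : ℝ}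
    (ht : 0 < t) (hne : (superLevel Ω u t).Nonempty) : LL H Ω u t < ∞ := by
  have hb : 0 ≤ β := by
    have := (hH.nonneg (ev 0)).trans (hβ (ev 0)); rwa [norm_ev, mul_one] at this
  calc LL H Ω u t ≤ ∫⁻ x in levelSet Ω u t, ENNReal.ofReal β ∂(μH[1] : Measure E2) := by
        apply lintegral_mono
        intro x
        apply ENNReal.ofReal_le_ofReal
        exact (hβ _).trans (mul_le_of_le_one_right hb (nu_norm_le x))
    _ < ∞ := by
        rw [setLIntegral_const]
        exact ENNReal.mul_lt_top ENNReal.ofReal_lt_top (level_finite hΩo hΩb hu ht hne)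

lemma lambda_eq (hH : IsAnisoNorm H) {β : ℝ} (hβ : ∀ ξ, H ξ ≤ β * ‖ξ‖) (t : ℝ) :
    lambdaH H Ω u t = (LL H Ω u t).toReal := by
  unfold lambdaH LL
  exact integral_eq_lintegral_of_nonneg_ae (Filter.Eventually.of_forall fun x => hH.nonneg _)
    ((H_cont hH hβ).measurable.comp nu_measurable).aestronglyMeasurable

lemma evp_cont : Continuous evp := by
  unfold evp
  fun_prop

lemma LL_formula (hH : IsAnisoNorm H) (hΩo : IsOpen Ω)
    (hΩb : Bornology.IsBounded Ω) (hΩc : Convex ℝ Ω) (hu : MemPhi0 Ω u) {t : ℝ}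
    (ht : 0 < t) (hne : (superLevel Ω u t).Nonempty) :
    LL H Ω u t = ENNReal.ofReal (1/4) * ∫⁻ ψ in Ioc 0 (2 * Real.pi),
      ENNReal.ofReal (ff H ψ) * (2 * volume (pj ψ '' superLevel Ω u t)) := by
  have hpi : (0:ℝ) ≤ 2 * Real.pi := by positivity
  have hrep : ∀ x, ENNReal.ofReal (H x) = ENNReal.ofReal (1/4) * ∫⁻ ψ in Ioc 0 (2 * Real.pi),
      ENNReal.ofReal (ff H ψ) * ENNReal.ofReal |⟪x, evp ψ⟫| := by
    intro x
    have hc : Continuous fun ψ => |⟪x, evp ψ⟫| * ff H ψ := by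
      have := evp_cont; have := ff_cont hH; fun_prop
    rw [H_repr hH x, ENNReal.ofReal_mul (by norm_num),
      intervalIntegral.integral_of_le hpi, ofReal_integral_eq_lintegral_ofReal
        ((hc.integrableOn_Icc).mono_set Ioc_subset_Icc_self)
        (Filter.Eventually.of_forall fun ψ => mul_nonneg (abs_nonneg _) (ff_nonneg hH ψ))]
    congr 1
    apply lintegral_congr
    intro ψ
    rw [mul_comm, ENNReal.ofReal_mul (ff_nonneg hH ψ)]
  haveI : IsFiniteMeasure ((μH[1] : Measure E2).restrict (levelSet Ω u t)) :=
    ⟨by rw [Measure.restrict_apply_univ]; exact level_finite hΩo hΩb hu ht hne⟩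
  unfold LL
  simp_rw [hrep]
  rw [lintegral_const_mul']
  swap
  · exact ENNReal.ofReal_ne_top
  congr 1
  rw [lintegral_lintegral_swap]
  · apply lintegral_congr
    intro ψ
    rw [lintegral_const_mul' _ _ ENNReal.ofReal_ne_top, level_area hΩo hΩb hΩc hu ψ ht hne]
  · apply Measurable.aemeasurable
    have m1 : Measurable fun q : E2 × ℝ => nuLevel u q.1 := nu_measurable.comp measurable_fst
    have m2 : Measurable fun q : E2 × ℝ => evp q.2 := evp_cont.measurable.comp measurable_snd
    have m3 : Measurable fun q : E2 × ℝ => ff H q.2 :=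
      (ff_cont hH).measurable.comp measurable_snd
    have m4 : Measurable fun q : E2 × ℝ => ⟪nuLevel u q.1, evp q.2⟫ := m1.inner m2
    have m5 : Measurable fun q : E2 × ℝ => |⟪nuLevel u q.1, evp q.2⟫| := measurable_norm.comp m4
    exact m3.ennreal_ofReal.mul m5.ennreal_ofReal

lemma beta_pos (hH : IsAnisoNorm H) {β : ℝ} (hβ : ∀ ξ, H ξ ≤ β * ‖ξ‖) : 0 < β := by
  have := (hh_pos hH 0).trans_le (hβ (ev 0)); rwa [norm_ev, mul_one] at this

lemma lambda_drop (hH : IsAnisoNorm H) {β : ℝ} (hβ : ∀ ξ, H ξ ≤ β * ‖ξ‖) (hΩo : IsOpen Ω)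
    (hΩb : Bornology.IsBounded Ω) (hΩc : Convex ℝ Ω) (hu : MemPhi0 Ω u) {t1 t2 : ℝ}
    (ht : 0 < t1) (h12 : t1 < t2) (hne : (superLevel Ω u t2).Nonempty) :
    t2 - t1 ≤ β * gM Ω u / (2 * kappa H) * (lambdaH H Ω u t1 - lambdaH H Ω u t2) := by
  have hne1 : (superLevel Ω u t1).Nonempty := hne.mono fun x hx => ⟨hx.1, h12.trans hx.2⟩
  have ht2 := ht.trans h12
  have hM := gM_pos hΩo hΩb hΩc hu ht2 hne
  have hb := beta_pos hH hβ
  have hk := kappa_pos hH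
  have hpi : (0:ℝ) ≤ 2 * Real.pi := by positivity
  set δ := (t2 - t1) / gM Ω u with hδ
  have hδ0 : 0 ≤ δ := div_nonneg (by linarith) hM.le
  have hδM : gM Ω u * δ = t2 - t1 := by rw [hδ]; field_simp
  set I := ∫ θ in (0:ℝ)..(2*Real.pi), ff H θ with hI
  have hIl : ENNReal.ofReal I = ∫⁻ ψ in Ioc 0 (2 * Real.pi), ENNReal.ofReal (ff H ψ) := by
    rw [hI, intervalIntegral.integral_of_le hpi, ofReal_integral_eq_lintegral_ofReal
        (((ff_cont hH).integrableOn_Icc).mono_set Ioc_subset_Icc_self)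
        (Filter.Eventually.of_forall fun ψ => ff_nonneg hH ψ)]
  have hI0 : 0 ≤ I := intervalIntegral.integral_nonneg hpi fun ψ _ => ff_nonneg hH ψ
  have hLL : LL H Ω u t2 + ENNReal.ofReal (δ * I) ≤ LL H Ω u t1 := by
    rw [LL_formula hH hΩo hΩb hΩc hu ht hne1, LL_formula hH hΩo hΩb hΩc hu ht2 hne]
    have e : ENNReal.ofReal (δ * I) = ENNReal.ofReal (1/4) * ∫⁻ ψ in Ioc 0 (2 * Real.pi),
        ENNReal.ofReal (ff H ψ) * ENNReal.ofReal (4 * δ) := by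
      rw [lintegral_mul_const' _ _ ENNReal.ofReal_ne_top, ← hIl, ← ENNReal.ofReal_mul hI0,
        ← ENNReal.ofReal_mul (by norm_num)]
      congr 1; ring
    rw [e, ← mul_add, ← lintegral_add_right _
      (((ff_cont hH).measurable.ennreal_ofReal).mul_const _)]
    gcongr with ψ
    rw [← mul_add]
    gcongr
    have := pj_fat hΩo hΩb hΩc hu ht h12 hδ0 hδM.le hne ψ
    calc 2 * volume (pj ψ '' superLevel Ω u t2) + ENNReal.ofReal (4 * δ)
        = 2 * (volume (pj ψ '' superLevel Ω u t2) + ENNReal.ofReal (2 * δ)) := by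
          rw [mul_add, show (4 * δ) = 2 * (2 * δ) by ring,
            ENNReal.ofReal_mul (p := 2) (q := 2 * δ) (by norm_num), ENNReal.ofReal_ofNat]
      _ ≤ _ := by gcongr
  have hf1 := LL_finite hH hβ hΩo hΩb hu ht hne1
  have hf2 := LL_finite hH hβ hΩo hΩb hu ht2 hne
  have hlam : lambdaH H Ω u t2 + δ * I ≤ lambdaH H Ω u t1 := by
    rw [lambda_eq hH hβ, lambda_eq hH hβ]
    have := ENNReal.toReal_mono hf1.ne hLL
    rwa [ENNReal.toReal_add hf2.ne ENNReal.ofReal_ne_top,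
      ENNReal.toReal_ofReal (mul_nonneg hδ0 hI0)] at this
  have hkI : 2 * kappa H ≤ β * I := two_kappa_le hH hβ
  have h5 : δ * (2 * kappa H) ≤ β * (lambdaH H Ω u t1 - lambdaH H Ω u t2) :=
    calc δ * (2 * kappa H) ≤ δ * (β * I) := by gcongr
      _ = β * (δ * I) := by ring
      _ ≤ _ := by gcongr; linarith
  rw [div_mul_eq_mul_div, le_div_iff₀ (by positivity), ← hδM]
  calc gM Ω u * δ * (2 * kappa H) = gM Ω u * (δ * (2 * kappa H)) := by ring
    _ ≤ gM Ω u * (β * (lambdaH H Ω u t1 - lambdaH H Ω u t2)) := by gcongr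
    _ = _ := by ring

lemma lambda_empty (hH : IsAnisoNorm H) (hΩo : IsOpen Ω)
    (hΩb : Bornology.IsBounded Ω) (hu : MemPhi0 Ω u) {t : ℝ}
    (ht : 0 < t) (hne : ¬ (superLevel Ω u t).Nonempty) : lambdaH H Ω u t = 0 := by
  unfold lambdaH
  apply setIntegral_eq_zero_of_forall_eq_zero
  intro x hx
  have hxΩ := level_mem hΩo hu ht hx
  have hg : gradient u x = 0 := by
    have hm : IsLocalMax u x := by
      filter_upwards [hΩo.mem_nhds hxΩ] with y hy
      by_contra h
      exact hne ⟨y, hy, by rw [hx.2] at h; exact not_le.1 h⟩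
    have := hm.fderiv_eq_zero
    rw [← norm_eq_zero, norm_grad, this, norm_zero]
  have : nuLevel u x = 0 := by simp [nuLevel, hg]
  rw [this]
  simpa using hH.homog 0 0

lemma main_aux (hH : IsAnisoNorm H)
    (hΩo : IsOpen Ω) (hΩb : Bornology.IsBounded Ω) (hΩc : Convex ℝ Ω)
    (hu : MemPhi0 Ω u)
    {β : ℝ} (hβ : ∀ ξ, H ξ ≤ β * ‖ξ‖) :
    AntitoneOn (diamondRe H Ω u) (Ioc 0 (PerH H Ω u)) ∧
    LipschitzOnWith
      (Real.toNNReal (β * gM Ω u / (2 * kappa H)))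
      (diamondRe H Ω u) (Ioc 0 (PerH H Ω u)) := by
  set C := β * gM Ω u / (2 * kappa H) with hC
  have hC0 : 0 ≤ C := div_nonneg (mul_nonneg (beta_pos hH hβ).le gM_nonneg)
    (by have := kappa_pos hH; linarith)
  have hsl : ∀ t s : ℝ, 0 < t → 0 < s → s ≤ lambdaH H Ω u t → (superLevel Ω u t).Nonempty := by
    intro t s ht hs h
    by_contra hne
    rw [lambda_empty hH hΩo hΩb hu ht hne] at h
    linarith
  have hbdd : ∀ s : ℝ, 0 < s → BddAbove {t : ℝ | 0 ≤ t ∧ s ≤ lambdaH H Ω u t} := by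
    intro s hs
    obtain ⟨m, hm⟩ := hΩb.isCompact_closure.bddAbove_image (u_cont hu)
    refine ⟨max m 0, ?_⟩
    rintro t ⟨ht, h⟩
    rcases ht.eq_or_lt with h0 | h0
    · rw [← h0]; exact le_max_right _ _
    obtain ⟨x, hx⟩ := hsl t s h0 hs h
    exact (hx.2.le.trans (hm ⟨x, subset_closure hx.1, rfl⟩)).trans (le_max_left _ _)
  have hnon : ∀ s ∈ Ioc 0 (PerH H Ω u), (0:ℝ) ∈ {t : ℝ | 0 ≤ t ∧ s ≤ lambdaH H Ω u t} :=
    fun s hs => ⟨le_rfl, hs.2⟩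
  have hanti : AntitoneOn (diamondRe H Ω u) (Ioc 0 (PerH H Ω u)) := by
    intro s1 h1 s2 h2 h12
    exact csSup_le_csSup (hbdd s1 h1.1) ⟨0, hnon s2 h2⟩ fun t ht => ⟨ht.1, h12.trans ht.2⟩
  have hkey : ∀ s1 ∈ Ioc 0 (PerH H Ω u), ∀ s2 ∈ Ioc 0 (PerH H Ω u), s1 ≤ s2 →
      diamondRe H Ω u s1 - diamondRe H Ω u s2 ≤ C * (s2 - s1) := by
    intro s1 h1 s2 h2 h12
    set a := diamondRe H Ω u s2 with ha
    have ha0 : 0 ≤ a := le_csSup (hbdd s2 h2.1) (hnon s2 h2)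
    rw [sub_le_iff_le_add]
    refine csSup_le ⟨0, hnon s1 h1⟩ ?_
    rintro t ⟨ht0, ht⟩
    have hCs : 0 ≤ C * (s2 - s1) := mul_nonneg hC0 (by linarith)
    by_contra hcon
    push Not at hcon
    obtain ⟨t', hat', ht'⟩ : ∃ t', a < t' ∧ t' < t - C * (s2 - s1) :=
      exists_between (by linarith)
    have htt : t' < t := by linarith
    have hlt : lambdaH H Ω u t' < s2 := by
      by_contra h
      have : t' ≤ a := le_csSup (hbdd s2 h2.1) ⟨by linarith, not_lt.1 h⟩
      linarith
    have hd := lambda_drop hH hβ hΩo hΩb hΩc hu (t1 := t') (t2 := t) (by linarith) htt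
      (hsl t s1 (by linarith) h1.1 ht)
    rw [← hC] at hd
    have : C * (lambdaH H Ω u t' - lambdaH H Ω u t) ≤ C * (s2 - s1) := by
      gcongr
    linarith
  refine ⟨hanti, LipschitzOnWith.of_dist_le_mul fun s1 h1 s2 h2 => ?_⟩
  rw [Real.coe_toNNReal _ hC0, Real.dist_eq, Real.dist_eq]
  rcases le_total s1 s2 with h | h
  · have hk := hkey s1 h1 s2 h2 h
    have := hanti h1 h2 h
    rw [abs_of_nonneg (by linarith), abs_sub_comm, abs_of_nonneg (by linarith)]
    exact hk
  · have hk := hkey s2 h2 s1 h1 h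
    have := hanti h2 h1 h
    rw [abs_sub_comm, abs_of_nonneg (by linarith), abs_of_nonneg (by linarith)]
    exact hk

end partE

/-- for `u ∈ Φ₀(Ω) ∩ C²(E_u)` on a bounded convex open `Ω` with `C²`
boundary, the rearrangement `u^♦` is `C^{0,1}` on `(0, P_H(Ω)]`: it is decreasing there and
Lipschitz with constant (i.e. bound `C` on `-(u^♦)'`) `C = β · max_{Ω̄}|∇u| / (2κ)`,
where `β` is any constant with `H(ξ) ≤ β|ξ|`. -/
theorem diamondRe_lipschitz
    (H : E2 → ℝ) (hH : IsAnisoNorm H)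
    (Ω : Set E2) (hΩo : IsOpen Ω) (hΩb : Bornology.IsBounded Ω) (hΩc : Convex ℝ Ω)
    (hΩbd : HasC2Boundary Ω)
    (u : E2 → ℝ) (hu : MemPhi0 Ω u) (hu2 : ContDiffOn ℝ 2 u (Eu Ω u))
    (β : ℝ) (hβ : ∀ ξ, H ξ ≤ β * ‖ξ‖) :
    AntitoneOn (diamondRe H Ω u) (Ioc 0 (PerH H Ω u)) ∧
    LipschitzOnWith
      (Real.toNNReal (β * sSup ((fun x => ‖gradient u x‖) '' closure Ω) / (2 * kappa H)))
      (diamondRe H Ω u) (Ioc 0 (PerH H Ω u)) := by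
  exact main_aux hH hΩo hΩb hΩc hu hβ
end
end
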